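/- arXiv:quant-ph/0606225 — 2 statements merged into one kernel-verified Lean document; each statement's English description precedes it below -/
import Mathlib

section
/- Let ψ^{AR} be a density operator on A⊗R with A = A₁⊗A₂ and d_A ≥ 2. Then ∫_{U(A)} Tr[ σ^{A₂R}(U) ( σ^{A₂}(U) ⊗ σ^R(U) ) ] dU = ((p+q)/2) Tr[(ψ^R)²] + ((p−q)/2) Tr[ ψ^{AR} (ψ^A ⊗ ψ^R) ], where p = (d_{A₁}+d_{A₂})/(d_A+1) and q = (d_{A₁}−d_{A₂})/(d_A−1). -/
open Matrix MeasureTheory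
open scoped Kronecker ComplexOrder

noncomputable instance matMeas {m n : Type*} : MeasurableSpace (Matrix m n ℂ) :=
  (inferInstance : MeasurableSpace (m → n → ℂ))
/-- `σ^{A₂R}(U) = Tr_{A₁}[(U ⊗ I_R) ψ (U ⊗ I_R)ᴴ]`. -/
noncomputable def sigmaA2R {ιA₁ ιA₂ ιR : Type} [Fintype ιA₁] [Fintype ιA₂] [Fintype ιR]
    [DecidableEq ιR]
    (ψ : Matrix ((ιA₁ × ιA₂) × ιR) ((ιA₁ × ιA₂) × ιR) ℂ)
    (U : Matrix (ιA₁ × ιA₂) (ιA₁ × ιA₂) ℂ) : Matrix (ιA₂ × ιR) (ιA₂ × ιR) ℂ :=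
  Matrix.of fun i j => ∑ a₁ : ιA₁,
    ((U ⊗ₖ (1 : Matrix ιR ιR ℂ)) * ψ * (U ⊗ₖ (1 : Matrix ιR ιR ℂ))ᴴ)
      ((a₁, i.1), i.2) ((a₁, j.1), j.2)

/-- Partial trace over the first tensor factor. -/
noncomputable def ptrFst {α β : Type*} [Fintype α] (M : Matrix (α × β) (α × β) ℂ) :
    Matrix β β ℂ :=
  Matrix.of fun i j => ∑ a : α, M (a, i) (a, j)

/-- Partial trace over the second tensor factor. -/
noncomputable def ptrSnd {α β : Type*} [Fintype β] (M : Matrix (α × β) (α × β) ℂ) :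
    Matrix α α ℂ :=
  Matrix.of fun i j => ∑ b : β, M (i, b) (j, b)

/-!
The twirl `∫ (U ⊗ U) X (U ⊗ U)ᴴ dU` commutes with every `V ⊗ V`. Conjugating by diagonal unitaries,
permutation matrices and one unitary mixing two basis vectors shows that such an operator is
`a • 1 + b • F` with `F` the swap of the two tensor factors, and `a`, `b` are read off from the
traces against `1` and `F`, which the twirl preserves.

Since `σ^R(U) = ψ^R`, the cross term equals `Tr[Tr_{A₁}(U M Uᴴ) Tr_{A₁}(U N Uᴴ)]` with
`M = Tr_R[ψ (I ⊗ ψ^R)]` and `N = ψ^A`. This is the trace of `(U ⊗ U) (M ⊗ N) (U ⊗ U)ᴴ` against the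
swap `F₂` of the two copies of `A₂` alone, so its average follows from the twirl of `M ⊗ N` and
from `Tr F₂ = d_{A₁}² d_{A₂}`, `Tr (F F₂) = d_{A₁} d_{A₂}²`.
-/

section Twirl

variable {G A : Type*} [Group G] [MeasurableSpace G] [CStarAlgebra A]

/-- The twirl `∫ ρ(g) x ρ(g)* dμ(g)` of `x` by a unitary representation `ρ`; for the Haar
probability measure it is the projection of `x` onto the commutant of `ρ`. -/
noncomputable def twirl (ρ : G →* unitary A) (μ : Measure G) (x : A) : A :=
  ∫ g, (ρ g : A) * x * star (ρ g : A) ∂μ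

variable [TopologicalSpace G] [CompactSpace G] [OpensMeasurableSpace G]
  {ρ : G →* unitary A} {μ : Measure G}

lemma integrable_twirl [IsFiniteMeasure μ] (hρ : Continuous ρ) (x : A) :
    Integrable (fun g ↦ (ρ g : A) * x * star (ρ g : A)) μ :=
  Continuous.integrable_of_hasCompactSupport (by fun_prop) (.of_compactSpace _)

lemma commute_twirl [IsFiniteMeasure μ] [μ.IsMulLeftInvariant] [MeasurableMul G]
    (hρ : Continuous ρ) (x : A) (h : G) : Commute (ρ h : A) (twirl ρ μ x) := by
  have h_int := integrable_twirl (μ := μ) hρ x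
  calc (ρ h : A) * twirl ρ μ x
    _ = ∫ g, (ρ h : A) * ((ρ g : A) * x * star (ρ g : A)) ∂μ :=
        (integral_const_mul_of_integrable h_int).symm
    _ = ∫ g, (ρ (h * g) : A) * x * star (ρ (h * g) : A) * (ρ h : A) ∂μ := by
        simp [mul_assoc]
    _ = ∫ g, (ρ g : A) * x * star (ρ g : A) * (ρ h : A) ∂μ :=
        integral_mul_left_eq_self (fun g ↦ (ρ g : A) * x * star (ρ g : A) * (ρ h : A)) h
    _ = twirl ρ μ x * (ρ h : A) := integral_mul_const_of_integrable h_int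

lemma map_twirl_mul [FiniteDimensional ℂ A] [IsFiniteMeasure μ] (hρ : Continuous ρ)
    (φ : A →ₗ[ℂ] ℂ) (x z : A) :
    φ (twirl ρ μ x * z) = ∫ g, φ ((ρ g : A) * x * star (ρ g : A) * z) ∂μ := by
  have h_int := integrable_twirl (μ := μ) hρ x
  rw [twirl, ← integral_mul_const_of_integrable h_int]
  exact (φ.toContinuousLinearMap.integral_comp_comm (h_int.mul_const z)).symm

lemma map_twirl_mul_of_commute [FiniteDimensional ℂ A] [IsProbabilityMeasure μ]
    (hρ : Continuous ρ) {φ : A →ₗ[ℂ] ℂ} (hφ : ∀ a b, φ (a * b) = φ (b * a)) (x : A) {z : A}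
    (hz : ∀ g, Commute (ρ g : A) z) :
    φ (twirl ρ μ x * z) = φ (x * z) := by
  have h_const (g : G) : φ ((ρ g : A) * x * star (ρ g : A) * z) = φ (x * z) := by
    calc φ ((ρ g : A) * x * star (ρ g : A) * z)
      _ = φ (star (ρ g : A) * z * (ρ g : A) * x) := by
          rw [mul_assoc, hφ, ← mul_assoc]
      _ = φ (x * z) := by
          rw [mul_assoc (star _), ← (hz g).eq, ← mul_assoc, Unitary.coe_star_mul_self, one_mul, hφ]
  simp [map_twirl_mul hρ, h_const]

end Twirl

section UnitaryGroup

lemma compactSpace_unitary (A : Type*) [NormedRing A] [StarRing A] [CStarRing A] [ProperSpace A] :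
    CompactSpace (unitary A) := by
  refine isCompact_iff_compactSpace.mp <| Metric.isCompact_of_isClosed_isBounded
    isClosed_unitary <| isBounded_iff_forall_norm_le.mpr ⟨‖(1 : A)‖, fun U hU ↦ ?_⟩
  simpa using (CStarRing.norm_mem_unitary_mul (1 : A) hU).le

instance {m n : Type*} [Finite m] [Finite n] : BorelSpace (Matrix m n ℂ) :=
  inferInstanceAs (BorelSpace (m → n → ℂ))

variable {n : Type*} [Fintype n] [DecidableEq n]

open scoped Matrix.Norms.L2Operator in
instance : CompactSpace (Matrix.unitaryGroup n ℂ) :=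
  have : ProperSpace (Matrix n n ℂ) := FiniteDimensional.proper ℂ _
  compactSpace_unitary _

variable (n) in
/-- The representation `U ↦ U ⊗ U` of the unitary group. -/
noncomputable def kroneckerSquare :
    Matrix.unitaryGroup n ℂ →* Matrix.unitaryGroup (n × n) ℂ where
  toFun U := ⟨(U : Matrix n n ℂ) ⊗ₖ (U : Matrix n n ℂ), kronecker_mem_unitary U.2 U.2⟩
  map_one' := Subtype.ext one_kronecker_one
  map_mul' _ _ := Subtype.ext (mul_kronecker_mul _ _ _ _)

lemma coe_kroneckerSquare (U : Matrix.unitaryGroup n ℂ) :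
    (kroneckerSquare n U : Matrix (n × n) (n × n) ℂ) = (U : Matrix n n ℂ) ⊗ₖ (U : Matrix n n ℂ) :=
  rfl

variable (n) in
lemma continuous_kroneckerSquare : Continuous (kroneckerSquare n) :=
  Continuous.subtype_mk (continuous_matrix fun _ _ ↦
    (continuous_subtype_val.matrix_elem _ _).mul (continuous_subtype_val.matrix_elem _ _)) _

lemma permMatrix_mem_unitaryGroup (σ : Equiv.Perm n) :
    σ.permMatrix ℂ ∈ Matrix.unitaryGroup n ℂ := by
  rw [mem_unitaryGroup_iff, star_eq_conjTranspose, conjTranspose_permMatrix, ← permMatrix_mul,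
    inv_mul_cancel, permMatrix_one]

lemma diagonal_mem_unitaryGroup {v : n → ℂ} (hv : ∀ i, v i * star (v i) = 1) :
    diagonal v ∈ Matrix.unitaryGroup n ℂ := by
  rw [mem_unitaryGroup_iff, star_eq_conjTranspose, diagonal_conjTranspose, diagonal_mul_diagonal,
    ← diagonal_one]
  exact congrArg diagonal (funext hv)

lemma exists_mem_unitaryGroup_apply_ne_zero {i k : n} (hik : i ≠ k) :
    ∃ V ∈ Matrix.unitaryGroup n ℂ, V i i ≠ 0 ∧ V i k ≠ 0 := by
  let S := (Equiv.swap i k).permMatrix ℂ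
  have h_sq : S * S = 1 := by
    rw [← permMatrix_mul, Equiv.swap_mul_self, permMatrix_one]
  have h_star : star S = S := by
    rw [star_eq_conjTranspose, conjTranspose_permMatrix, Equiv.swap_inv]
  -- `S` is a self-adjoint involution and `3 / 5 + 4 / 5 * I` has modulus one.
  refine ⟨(3 / 5 : ℂ) • 1 + (4 / 5 * Complex.I) • S, ?_, ?_, ?_⟩
  · have h_norm : (3 / 5 : ℂ) * (3 / 5) - (4 / 5 * Complex.I) * (4 / 5 * Complex.I) = 1 := by
      linear_combination (-16 / 25 : ℂ) * Complex.I_mul_I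
    have h_adj : star ((3 / 5 : ℂ) • 1 + (4 / 5 * Complex.I) • S) =
        (3 / 5 : ℂ) • 1 - (4 / 5 * Complex.I) • S := by
      simp [h_star, sub_eq_add_neg]
    rw [mem_unitaryGroup_iff, h_adj]
    calc _ = ((3 / 5 : ℂ) * (3 / 5)) • (1 : Matrix n n ℂ)
            - ((4 / 5 * Complex.I) * (4 / 5 * Complex.I)) • (S * S) := by
          simp only [add_mul, mul_sub, smul_mul_smul_comm, mul_one, one_mul]
          module
      _ = 1 := by rw [h_sq, ← sub_smul, h_norm, one_smul]
  · simp [S, PEquiv.toMatrix_apply, hik.symm]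
  · simp [S, PEquiv.toMatrix_apply, hik]

end UnitaryGroup

section SwapMatrix

variable {n : Type*} [DecidableEq n]

variable (n) in
/-- The swap (flip) operator `F` on `ℂⁿ ⊗ ℂⁿ`. -/
noncomputable def swapMatrix : Matrix (n × n) (n × n) ℂ :=
  Equiv.Perm.permMatrix ℂ (Equiv.prodComm n n)

lemma swapMatrix_apply (p q : n × n) : swapMatrix n p q = if p.swap = q then 1 else 0 := by
  simp [swapMatrix, Equiv.Perm.permMatrix, PEquiv.toMatrix_apply, eq_comm]

variable [Fintype n]

lemma swapMatrix_mul_self : swapMatrix n * swapMatrix n = 1 := by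
  rw [swapMatrix, ← permMatrix_mul, ← permMatrix_one]
  congr 1

lemma trace_swapMatrix : (swapMatrix n).trace = Fintype.card n := by
  simp [trace, swapMatrix_apply, Fintype.sum_prod_type, Prod.ext_iff, ite_and]

lemma trace_kronecker_mul_swapMatrix (M N : Matrix n n ℂ) :
    ((M ⊗ₖ N) * swapMatrix n).trace = (M * N).trace := by
  simp [trace, mul_apply, swapMatrix_apply, Fintype.sum_prod_type, Prod.ext_iff, ite_and]

lemma commute_kroneckerSquare_swapMatrix (V : Matrix.unitaryGroup n ℂ) :
    Commute (kroneckerSquare n V).1 (swapMatrix n) := by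
  ext p q
  simp [coe_kroneckerSquare, mul_apply, swapMatrix_apply, Fintype.sum_prod_type, Prod.ext_iff,
    ite_and, mul_comm]

end SwapMatrix

section Commutant

variable {n : Type*} [Fintype n] [DecidableEq n]
variable {X : Matrix (n × n) (n × n) ℂ}
  (hX : ∀ V : Matrix.unitaryGroup n ℂ, Commute (kroneckerSquare n V).1 X)
include hX

lemma apply_eq_zero_of_commute_kroneckerSquare {i j k l : n} (h : s(i, k) ≠ s(j, l)) :
    X (i, k) (j, l) = 0 := by
  -- Conjugation by `diagonal v ⊗ diagonal v` scales this entry by `v i * v k / (v j * v l)`.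
  have h_phase (x : n) :
      (if i = x then Complex.I else 1) * (if k = x then Complex.I else 1) * X (i, k) (j, l) =
      X (i, k) (j, l) * ((if j = x then Complex.I else 1) * (if l = x then Complex.I else 1)) := by
    have hV := hX ⟨diagonal fun y ↦ if y = x then Complex.I else 1,
      diagonal_mem_unitaryGroup fun y ↦ by split_ifs <;> simp⟩
    simpa [coe_kroneckerSquare, diagonal_kronecker_diagonal, diagonal_mul, mul_diagonal] using
      congr($(hV.eq) (i, k) (j, l))
  have hi := h_phase i
  have hk := h_phase k
  have hI : Complex.I ≠ 1 := fun h ↦ by simpa using congrArg Complex.re h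
  have hI' : (-1 : ℂ) ≠ Complex.I := fun h ↦ by simpa using congrArg Complex.re h
  have := Complex.I_mul_I
  grind [Sym2.eq_iff]

lemma apply_perm_of_commute_kroneckerSquare (σ : Equiv.Perm n) (i j k l : n) :
    X (σ i, σ k) (σ j, σ l) = X (i, k) (j, l) := by
  have h_kron : σ.permMatrix ℂ ⊗ₖ σ.permMatrix ℂ =
      Equiv.Perm.permMatrix ℂ (Equiv.prodCongr σ σ) := by
    ext p q
    simp [PEquiv.toMatrix_apply, Prod.ext_iff, ← ite_and, and_comm, eq_comm]
  have hσ := (hX ⟨_, permMatrix_mem_unitaryGroup σ⟩).eq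
  rw [coe_kroneckerSquare, h_kron] at hσ
  simpa [PEquiv.toMatrix_toPEquiv_mul, PEquiv.mul_toMatrix_toPEquiv] using
    congr($hσ (i, k) (σ j, σ l))

lemma apply_diag_of_commute_kroneckerSquare {i k : n} (hik : i ≠ k) :
    X (i, i) (i, i) = X (i, k) (i, k) + X (k, i) (i, k) := by
  obtain ⟨V, hV, hVi, hVk⟩ := exists_mem_unitaryGroup_apply_ne_zero hik
  have h_left : ((V ⊗ₖ V) * X) (i, i) (i, k) =
      V i i * V i k * (X (i, k) (i, k) + X (k, i) (i, k)) := by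
    rw [mul_apply, Finset.sum_eq_add (i, k) (k, i) (by simp [hik]) ?_ (by simp) (by simp)]
    · simp only [kronecker_apply]; ring
    · rintro ⟨p, q⟩ - ⟨hp, hq⟩
      rw [apply_eq_zero_of_commute_kroneckerSquare hX (by grind [Sym2.eq_iff]), mul_zero]
  have h_right : (X * (V ⊗ₖ V)) (i, i) (i, k) = X (i, i) (i, i) * (V i i * V i k) := by
    rw [mul_apply, Finset.sum_eq_single (i, i) ?_ (by simp), kronecker_apply]
    rintro ⟨p, q⟩ - hpq
    rw [apply_eq_zero_of_commute_kroneckerSquare hX (by grind [Sym2.eq_iff]), zero_mul]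
  have h_eq : V i i * V i k * (X (i, k) (i, k) + X (k, i) (i, k)) =
      X (i, i) (i, i) * (V i i * V i k) := by
    rw [← h_left, ← h_right]; exact congr($((hX ⟨V, hV⟩).eq) (i, i) (i, k))
  exact mul_left_cancel₀ (mul_ne_zero hVi hVk) (by rw [h_eq, mul_comm])

theorem exists_eq_smul_one_add_smul_swapMatrix_of_commute :
    ∃ a b : ℂ, X = a • 1 + b • swapMatrix n := by
  rcases subsingleton_or_nontrivial n with _ | _
  · exact ⟨∑ p, X p p, 0, by ext p q; simp [Subsingleton.elim q p, Fintype.sum_subsingleton _ p]⟩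
  obtain ⟨x, y, hxy⟩ := exists_pair_ne n
  have h_trans {i k : n} (hik : i ≠ k) :
      X (i, k) (i, k) = X (x, y) (x, y) ∧ X (k, i) (i, k) = X (y, x) (x, y) := by
    obtain ⟨σ, rfl, rfl⟩ : ∃ σ : Equiv.Perm n, σ x = i ∧ σ y = k :=
      MulAction.is_two_pretransitive_iff.mp (Equiv.Perm.isMultiplyPretransitive n 2) hxy hik
    exact ⟨apply_perm_of_commute_kroneckerSquare hX σ _ _ _ _,
      apply_perm_of_commute_kroneckerSquare hX σ _ _ _ _⟩
  refine ⟨X (x, y) (x, y), X (y, x) (x, y), ?_⟩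
  ext ⟨i, k⟩ ⟨j, l⟩
  simp only [Matrix.add_apply, Matrix.smul_apply, one_apply, swapMatrix_apply]
  by_cases h : s(i, k) = s(j, l)
  · rcases eq_or_ne i k with rfl | hik
    · obtain ⟨z, hz⟩ := exists_ne i
      obtain ⟨rfl, rfl⟩ : i = j ∧ i = l := by grind [Sym2.eq_iff]
      simp [apply_diag_of_commute_kroneckerSquare hX hz.symm, h_trans hz.symm]
    · rcases Sym2.eq_iff.mp h with ⟨rfl, rfl⟩ | ⟨rfl, rfl⟩
      · simp [h_trans hik, hik, hik.symm]
      · simp [h_trans hik.symm, hik, hik.symm]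
  · obtain ⟨h_id, h_swap⟩ := not_or.mp (mt Sym2.eq_iff.mpr h)
    rw [apply_eq_zero_of_commute_kroneckerSquare hX h]
    simp [Prod.ext_iff, h_id, and_comm.not.mp h_swap]

end Commutant

section HaarAverage
open scoped Matrix.Norms.L2Operator

variable {n : Type*} [Fintype n] [DecidableEq n]
  {μ : Measure (Matrix.unitaryGroup n ℂ)} [IsProbabilityMeasure μ]

lemma trace_twirl_kroneckerSquare_mul (X Z : Matrix (n × n) (n × n) ℂ) :
    (twirl (kroneckerSquare n) μ X * Z).trace =
      ∫ U : Matrix.unitaryGroup n ℂ, ((kroneckerSquare n U).1 * X *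
        star (kroneckerSquare n U).1 * Z).trace ∂μ :=
  map_twirl_mul (continuous_kroneckerSquare n) (traceLinearMap (n × n) ℂ ℂ) X Z

lemma trace_twirl_kroneckerSquare_mul_of_commute (X : Matrix (n × n) (n × n) ℂ)
    {Z : Matrix (n × n) (n × n) ℂ} (hZ : ∀ U : Matrix.unitaryGroup n ℂ,
      Commute (kroneckerSquare n U).1 Z) :
    (twirl (kroneckerSquare n) μ X * Z).trace = (X * Z).trace :=
  map_twirl_mul_of_commute (φ := traceLinearMap (n × n) ℂ ℂ) (continuous_kroneckerSquare n)
    trace_mul_comm X hZ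

theorem twirl_kroneckerSquare [μ.IsMulLeftInvariant] (hn : 2 ≤ Fintype.card n)
    (X : Matrix (n × n) (n × n) ℂ) :
    twirl (kroneckerSquare n) μ X =
      ((Fintype.card n * X.trace - (X * swapMatrix n).trace) /
        (Fintype.card n * (Fintype.card n ^ 2 - 1)) : ℂ) • 1 +
      ((Fintype.card n * (X * swapMatrix n).trace - X.trace) /
        (Fintype.card n * (Fintype.card n ^ 2 - 1)) : ℂ) • swapMatrix n := by
  obtain ⟨a, b, h_twirl⟩ := exists_eq_smul_one_add_smul_swapMatrix_of_commute fun V ↦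
    commute_twirl (μ := μ) (continuous_kroneckerSquare n) X V
  have h_one := trace_twirl_kroneckerSquare_mul_of_commute (μ := μ) X fun _ ↦ .one_right _
  have h_swap :=
    trace_twirl_kroneckerSquare_mul_of_commute (μ := μ) X commute_kroneckerSquare_swapMatrix
  simp only [h_twirl, add_mul, smul_mul, one_mul, mul_one, swapMatrix_mul_self, trace_add,
    trace_smul, trace_one, trace_swapMatrix, Fintype.card_prod, smul_eq_mul, Nat.cast_mul]
    at h_one h_swap
  have hd : (Fintype.card n : ℂ) ≠ 0 := by norm_cast; lia
  have hd' : (Fintype.card n : ℂ) ^ 2 - 1 ≠ 0 := by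
    rw [sub_ne_zero]; norm_cast; nlinarith
  rw [h_twirl, ← h_one, ← h_swap]
  congr 2 <;> field

end HaarAverage

section PartialTrace

variable {α β : Type*} [Fintype α] [Fintype β]

lemma trace_ptrSnd (M : Matrix (α × β) (α × β) ℂ) : (ptrSnd M).trace = M.trace := by
  simp [trace, ptrSnd, Fintype.sum_prod_type]

lemma trace_ptrFst (M : Matrix (α × β) (α × β) ℂ) : (ptrFst M).trace = M.trace := by
  simp [trace, ptrFst, Fintype.sum_prod_type_right]

lemma ptrSnd_mul_kronecker_one [DecidableEq β] (M : Matrix (α × β) (α × β) ℂ)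
    (B : Matrix α α ℂ) : ptrSnd (M * (B ⊗ₖ (1 : Matrix β β ℂ))) = ptrSnd M * B := by
  ext i j
  simp only [ptrSnd, of_apply, mul_apply, Fintype.sum_prod_type, kronecker_apply, one_apply,
    mul_ite, mul_one, mul_zero, Finset.sum_ite_eq', Finset.mem_univ, if_true, Finset.sum_mul]
  exact Finset.sum_comm

lemma ptrSnd_kronecker_one_mul [DecidableEq β] (B : Matrix α α ℂ)
    (M : Matrix (α × β) (α × β) ℂ) : ptrSnd ((B ⊗ₖ (1 : Matrix β β ℂ)) * M) = B * ptrSnd M := by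
  ext i j
  simp only [ptrSnd, of_apply, mul_apply, Fintype.sum_prod_type, kronecker_apply, one_apply,
    mul_ite, mul_one, mul_zero, ite_mul, zero_mul, Finset.sum_ite_eq, Finset.mem_univ, if_true,
    Finset.mul_sum]
  exact Finset.sum_comm

lemma ptrFst_mul_one_kronecker [DecidableEq α] (M : Matrix (α × β) (α × β) ℂ)
    (C : Matrix β β ℂ) : ptrFst (M * ((1 : Matrix α α ℂ) ⊗ₖ C)) = ptrFst M * C := by
  ext i j
  simp only [ptrFst, of_apply, mul_apply, Fintype.sum_prod_type_right, kronecker_apply, one_apply,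
    mul_ite, mul_zero, ite_mul, zero_mul, one_mul, Finset.sum_ite_eq', Finset.mem_univ, if_true,
    Finset.sum_mul]
  exact Finset.sum_comm

lemma ptrFst_mul_kronecker_one_comm [DecidableEq β] (M : Matrix (α × β) (α × β) ℂ)
    (B : Matrix α α ℂ) :
    ptrFst (M * (B ⊗ₖ (1 : Matrix β β ℂ))) = ptrFst ((B ⊗ₖ (1 : Matrix β β ℂ)) * M) := by
  ext i j
  simp only [ptrFst, of_apply, mul_apply, Fintype.sum_prod_type, kronecker_apply, one_apply,
    mul_ite, mul_one, mul_zero, ite_mul, zero_mul, Finset.sum_ite_eq, Finset.sum_ite_eq',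
    Finset.mem_univ, if_true]
  rw [Finset.sum_comm]
  simp only [mul_comm]

lemma trace_mul_kronecker [DecidableEq α] (M : Matrix (α × β) (α × β) ℂ)
    (B : Matrix α α ℂ) (C : Matrix β β ℂ) :
    (M * (B ⊗ₖ C)).trace = (ptrSnd (M * ((1 : Matrix α α ℂ) ⊗ₖ C)) * B).trace := by
  classical
  rw [← ptrSnd_mul_kronecker_one, trace_ptrSnd, Matrix.mul_assoc, ← mul_kronecker_mul,
    Matrix.one_mul, Matrix.mul_one]

end PartialTrace

section SwapSndMatrix

variable {α β : Type*} [DecidableEq α] [DecidableEq β]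

variable (α β) in
/-- The operator on `(ℂᵅ ⊗ ℂᵝ) ⊗ (ℂᵅ ⊗ ℂᵝ)` exchanging the two copies of `ℂᵝ`. -/
noncomputable def swapSndMatrix : Matrix ((α × β) × (α × β)) ((α × β) × (α × β)) ℂ :=
  Matrix.of fun p q ↦ if ((p.1.1, p.2.2), (p.2.1, p.1.2)) = q then 1 else 0

variable [Fintype α] [Fintype β]

lemma trace_swapSndMatrix :
    (swapSndMatrix α β).trace = Fintype.card α ^ 2 * Fintype.card β := by
  simp only [trace, swapSndMatrix, Prod.ext_iff, ite_and, diag_apply, of_apply, ↓reduceIte,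
    Fintype.sum_prod_type, Finset.sum_ite_eq', Finset.mem_univ, Finset.sum_const, Finset.card_univ,
    nsmul_eq_mul, mul_one, Fintype.card_prod, Nat.cast_mul]
  ring

lemma trace_swapMatrix_mul_swapSndMatrix :
    (swapMatrix (α × β) * swapSndMatrix α β).trace = Fintype.card α * Fintype.card β ^ 2 := by
  simp only [trace, swapSndMatrix, Prod.ext_iff, ite_and, diag_apply, mul_apply, swapMatrix_apply,
    Prod.fst_swap, Prod.snd_swap, of_apply, mul_ite, mul_one, mul_zero, Fintype.sum_prod_type,
    Finset.sum_ite_irrel, Finset.sum_ite_eq', Finset.mem_univ, ↓reduceIte, Finset.sum_const_zero,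
    Finset.sum_boole, Finset.filter_const, Finset.card_univ, Finset.sum_const, Fintype.card_prod,
    nsmul_eq_mul, Nat.cast_mul]
  ring

lemma trace_ptrFst_mul_ptrFst (M N : Matrix (α × β) (α × β) ℂ) :
    (ptrFst M * ptrFst N).trace = ((M ⊗ₖ N) * swapSndMatrix α β).trace := by
  have h_diag (p q : α × β) : ((M ⊗ₖ N) * swapSndMatrix α β) (p, q) (p, q) =
      M p (p.1, q.2) * N q (q.1, p.2) := by
    simp [mul_apply, swapSndMatrix, Fintype.sum_prod_type, Prod.ext_iff, ite_and]
  rw [trace, trace, Fintype.sum_prod_type]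
  simp only [diag_apply, h_diag, Fintype.sum_prod_type_right]
  simp only [mul_apply, ptrFst, of_apply, Finset.sum_mul_sum]
  exact Finset.sum_congr rfl fun j _ ↦ Finset.sum_comm

end SwapSndMatrix

section PartialTraceAverage

variable {α β : Type*} [Fintype α] [DecidableEq α] [Fintype β] [DecidableEq β]

lemma integral_trace_ptrFst_mul_ptrFst (hαβ : 2 ≤ Fintype.card α * Fintype.card β)
    (μ : Measure (Matrix.unitaryGroup (α × β) ℂ)) [IsProbabilityMeasure μ] [μ.IsMulLeftInvariant]
    (M N : Matrix (α × β) (α × β) ℂ) :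
    ∫ U : Matrix.unitaryGroup (α × β) ℂ,
        (ptrFst (U.1 * M * U.1ᴴ) *
          ptrFst (U.1 * N * U.1ᴴ)).trace ∂μ =
      (((Fintype.card α + Fintype.card β) / (Fintype.card α * Fintype.card β + 1) +
        (Fintype.card α - Fintype.card β) / (Fintype.card α * Fintype.card β - 1)) / 2 : ℂ) *
        (M.trace * N.trace) +
      (((Fintype.card α + Fintype.card β) / (Fintype.card α * Fintype.card β + 1) -
        (Fintype.card α - Fintype.card β) / (Fintype.card α * Fintype.card β - 1)) / 2 : ℂ) *
        (M * N).trace := by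
  have h_twirl (U : Matrix.unitaryGroup (α × β) ℂ) :
      (ptrFst (U.1 * M * U.1ᴴ) *
          ptrFst (U.1 * N * U.1ᴴ)).trace =
        ((kroneckerSquare (α × β) U).1 * (M ⊗ₖ N) *
          star (kroneckerSquare (α × β) U).1 * swapSndMatrix α β).trace := by
    rw [trace_ptrFst_mul_ptrFst, coe_kroneckerSquare, star_eq_conjTranspose,
      conjTranspose_kronecker, mul_kronecker_mul, mul_kronecker_mul]
  have h_add : (Fintype.card α * Fintype.card β + 1 : ℂ) ≠ 0 := by norm_cast
  have h_sub : (Fintype.card α * Fintype.card β - 1 : ℂ) ≠ 0 := by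
    rw [sub_ne_zero]; norm_cast; lia
  have h_card : (Fintype.card α * Fintype.card β : ℂ) ≠ 0 := by norm_cast; lia
  have h_sq : ((Fintype.card α * Fintype.card β : ℂ) ^ 2 - 1) =
      (Fintype.card α * Fintype.card β + 1) * (Fintype.card α * Fintype.card β - 1) := by ring
  obtain ⟨hα, hβ⟩ := mul_ne_zero_iff.mp h_card
  simp_rw [h_twirl]
  rw [← trace_twirl_kroneckerSquare_mul, twirl_kroneckerSquare (by simpa using hαβ)]
  simp only [add_mul, smul_mul, Matrix.one_mul, trace_add, trace_smul, trace_swapSndMatrix,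
    trace_swapMatrix_mul_swapSndMatrix, trace_kronecker, trace_kronecker_mul_swapMatrix,
    Fintype.card_prod, Nat.cast_mul, smul_eq_mul, h_sq]
  field

end PartialTraceAverage

section ReducedState

variable {ιA₁ ιA₂ ιR : Type} [Fintype ιA₁] [Fintype ιA₂] [Fintype ιR] [DecidableEq ιR]
  (ψ : Matrix ((ιA₁ × ιA₂) × ιR) ((ιA₁ × ιA₂) × ιR) ℂ)

lemma sigmaA2R_eq_ptrFst (U : Matrix (ιA₁ × ιA₂) (ιA₁ × ιA₂) ℂ) :
    sigmaA2R ψ U = ptrFst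
      (((U ⊗ₖ (1 : Matrix ιR ιR ℂ)) * ψ * (Uᴴ ⊗ₖ (1 : Matrix ιR ιR ℂ))).submatrix
        (Equiv.prodAssoc ιA₁ ιA₂ ιR).symm (Equiv.prodAssoc ιA₁ ιA₂ ιR).symm) := by
  simp only [sigmaA2R, conjTranspose_kronecker, conjTranspose_one]
  rfl

lemma ptrSnd_sigmaA2R (U : Matrix (ιA₁ × ιA₂) (ιA₁ × ιA₂) ℂ) :
    ptrSnd (sigmaA2R ψ U) = ptrFst (U * ptrSnd ψ * Uᴴ) := by
  rw [← ptrSnd_kronecker_one_mul, ← ptrSnd_mul_kronecker_one, sigmaA2R_eq_ptrFst]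
  ext i j
  exact Finset.sum_comm

variable [DecidableEq ιA₁] [DecidableEq ιA₂]

lemma sigmaA2R_mul_one_kronecker (U : Matrix (ιA₁ × ιA₂) (ιA₁ × ιA₂) ℂ) (C : Matrix ιR ιR ℂ) :
    sigmaA2R ψ U * ((1 : Matrix ιA₂ ιA₂ ℂ) ⊗ₖ C) =
      sigmaA2R (ψ * ((1 : Matrix (ιA₁ × ιA₂) (ιA₁ × ιA₂) ℂ) ⊗ₖ C)) U := by
  have h_assoc : (1 : Matrix ιA₁ ιA₁ ℂ) ⊗ₖ ((1 : Matrix ιA₂ ιA₂ ℂ) ⊗ₖ C) =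
      ((1 : Matrix (ιA₁ × ιA₂) (ιA₁ × ιA₂) ℂ) ⊗ₖ C).submatrix
        (Equiv.prodAssoc ιA₁ ιA₂ ιR).symm (Equiv.prodAssoc ιA₁ ιA₂ ιR).symm := by
    rw [← one_kronecker_one, ← kronecker_assoc]
    rfl
  simp only [sigmaA2R_eq_ptrFst, ← ptrFst_mul_one_kronecker, h_assoc, submatrix_mul_equiv,
    Matrix.mul_assoc, ← mul_kronecker_mul, Matrix.one_mul, Matrix.mul_one]

lemma ptrFst_sigmaA2R (U : Matrix.unitaryGroup (ιA₁ × ιA₂) ℂ) :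
    ptrFst (sigmaA2R ψ U) = ptrFst ψ := by
  have h_ptr : ptrFst (sigmaA2R ψ U) =
      ptrFst ((U.1 ⊗ₖ (1 : Matrix ιR ιR ℂ)) * ψ * (U.1ᴴ ⊗ₖ (1 : Matrix ιR ιR ℂ))) := by
    ext i j
    simp only [sigmaA2R_eq_ptrFst, ptrFst, of_apply, Fintype.sum_prod_type_right]
    rfl
  have h_star : U.1ᴴ * U.1 = 1 := Unitary.coe_star_mul_self U
  rw [h_ptr, ptrFst_mul_kronecker_one_comm, ← Matrix.mul_assoc, ← mul_kronecker_mul, h_star,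
    Matrix.one_mul, one_kronecker_one, Matrix.one_mul]

lemma trace_sigmaA2R_mul_kronecker (U : Matrix.unitaryGroup (ιA₁ × ιA₂) ℂ) :
    (sigmaA2R ψ U * (ptrSnd (sigmaA2R ψ U) ⊗ₖ ptrFst (sigmaA2R ψ U))).trace =
      (ptrFst (U.1 * ptrSnd (ψ * ((1 : Matrix (ιA₁ × ιA₂) (ιA₁ × ιA₂) ℂ) ⊗ₖ ptrFst ψ)) * U.1ᴴ) *
        ptrFst (U.1 * ptrSnd ψ * U.1ᴴ)).trace := by
  rw [trace_mul_kronecker, ptrFst_sigmaA2R, sigmaA2R_mul_one_kronecker, ptrSnd_sigmaA2R,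
    ptrSnd_sigmaA2R]

end ReducedState

theorem average_cross_term_general
    {ιA₁ ιA₂ ιR : Type} [Fintype ιA₁] [DecidableEq ιA₁] [Fintype ιA₂] [DecidableEq ιA₂]
    [Fintype ιR] [DecidableEq ιR]
    (hdA : 2 ≤ Fintype.card ιA₁ * Fintype.card ιA₂)
    (ψ : Matrix ((ιA₁ × ιA₂) × ιR) ((ιA₁ × ιA₂) × ιR) ℂ)
    (μ : Measure (Matrix.unitaryGroup (ιA₁ × ιA₂) ℂ)) [IsProbabilityMeasure μ]
    [μ.IsMulLeftInvariant] :
    (∫ U : Matrix.unitaryGroup (ιA₁ × ιA₂) ℂ,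
        (sigmaA2R ψ (U : Matrix (ιA₁ × ιA₂) (ιA₁ × ιA₂) ℂ)
          * (ptrSnd (sigmaA2R ψ U) ⊗ₖ ptrFst (sigmaA2R ψ U))).trace ∂μ)
      = ((((Fintype.card ιA₁ : ℂ) + (Fintype.card ιA₂ : ℂ)) /
            ((Fintype.card ιA₁ : ℂ) * (Fintype.card ιA₂ : ℂ) + 1)
          + ((Fintype.card ιA₁ : ℂ) - (Fintype.card ιA₂ : ℂ)) /
            ((Fintype.card ιA₁ : ℂ) * (Fintype.card ιA₂ : ℂ) - 1)) / 2)
          * ((ptrFst ψ * ptrFst ψ).trace * ψ.trace)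
        + ((((Fintype.card ιA₁ : ℂ) + (Fintype.card ιA₂ : ℂ)) /
            ((Fintype.card ιA₁ : ℂ) * (Fintype.card ιA₂ : ℂ) + 1)
          - ((Fintype.card ιA₁ : ℂ) - (Fintype.card ιA₂ : ℂ)) /
            ((Fintype.card ιA₁ : ℂ) * (Fintype.card ιA₂ : ℂ) - 1)) / 2)
          * (ψ * (ptrSnd ψ ⊗ₖ ptrFst ψ)).trace := by
  have h_purity : (ptrSnd (ψ * ((1 : Matrix (ιA₁ × ιA₂) (ιA₁ × ιA₂) ℂ) ⊗ₖ ptrFst ψ))).trace =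
      (ptrFst ψ * ptrFst ψ).trace := by
    rw [trace_ptrSnd, ← trace_ptrFst, ptrFst_mul_one_kronecker]
  rw [trace_mul_kronecker, ← h_purity, ← trace_ptrSnd ψ, ← integral_trace_ptrFst_mul_ptrFst hdA μ]
  exact integral_congr_ae (.of_forall (trace_sigmaA2R_mul_kronecker ψ))

/-- **Haar average of the cross term:**
`∫ Tr[σ^{A₂R}(U)(σ^{A₂}(U) ⊗ σ^R(U))] dU
  = ((p+q)/2) Tr[(ψ^R)²] + ((p−q)/2) Tr[ψ^{AR}(ψ^A ⊗ ψ^R)]`, with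
`p = (d_{A₁}+d_{A₂})/(d_A+1)` and `q = (d_{A₁}−d_{A₂})/(d_A−1)`. -/
theorem average_cross_term
    {ιA₁ ιA₂ ιR : Type} [Fintype ιA₁] [DecidableEq ιA₁] [Fintype ιA₂] [DecidableEq ιA₂]
    [Fintype ιR] [DecidableEq ιR]
    (hdA : 2 ≤ Fintype.card ιA₁ * Fintype.card ιA₂)
    (ψ : Matrix ((ιA₁ × ιA₂) × ιR) ((ιA₁ × ιA₂) × ιR) ℂ)
    (hψ : ψ.PosSemidef) (hψtr : ψ.trace = 1)
    (μ : Measure (Matrix.unitaryGroup (ιA₁ × ιA₂) ℂ)) [IsProbabilityMeasure μ]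
    (hμ : ∀ V : Matrix.unitaryGroup (ιA₁ × ιA₂) ℂ,
      μ.map (fun U : Matrix.unitaryGroup (ιA₁ × ιA₂) ℂ => V * U) = μ) :
    (∫ U : Matrix.unitaryGroup (ιA₁ × ιA₂) ℂ,
        (sigmaA2R ψ (U : Matrix (ιA₁ × ιA₂) (ιA₁ × ιA₂) ℂ)
          * (ptrSnd (sigmaA2R ψ U) ⊗ₖ ptrFst (sigmaA2R ψ U))).trace ∂μ)
      = ((((Fintype.card ιA₁ : ℂ) + (Fintype.card ιA₂ : ℂ)) /
            ((Fintype.card ιA₁ : ℂ) * (Fintype.card ιA₂ : ℂ) + 1)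
          + ((Fintype.card ιA₁ : ℂ) - (Fintype.card ιA₂ : ℂ)) /
            ((Fintype.card ιA₁ : ℂ) * (Fintype.card ιA₂ : ℂ) - 1)) / 2)
          * (ptrFst ψ * ptrFst ψ).trace
        + ((((Fintype.card ιA₁ : ℂ) + (Fintype.card ιA₂ : ℂ)) /
            ((Fintype.card ιA₁ : ℂ) * (Fintype.card ιA₂ : ℂ) + 1)
          - ((Fintype.card ιA₁ : ℂ) - (Fintype.card ιA₂ : ℂ)) /
            ((Fintype.card ιA₁ : ℂ) * (Fintype.card ιA₂ : ℂ) - 1)) / 2)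
          * (ψ * (ptrSnd ψ ⊗ₖ ptrFst ψ)).trace := by
  have : μ.IsMulLeftInvariant := ⟨hμ⟩
  simpa only [hψtr, mul_one] using average_cross_term_general hdA ψ μ
end

section
/- I.i.d. form of the fully quantum Slepian–Wolf bound: let ψ be a pure state on (A₁⊗A₂)⊗B⊗R, let n ≥ 1 be an integer, δ > 0, and let H_A, H_R, H_{AR} be real numbers with I := H_A + H_R − H_{AR}. Suppose d_{A₁}d_{A₂} ≤ 2^{n(H_A+δ)}, d_R ≤ 2^{n(H_R+δ)}, Tr[(ψ^{AR})²] ≤ 2^{−n(H_{AR}−δ)}, Tr[(ψ^A)²]·Tr[(ψ^R)²] ≤ 2^{−n(H_A+H_R−2δ)}, log₂ d_{A₁} ≥ n(I/2 + 2δ), and n·I ≥ n·δ + 1. Then 2[ (2 d_A d_R / d_{A₁}²) ( Tr[(ψ^{AR})²] + 2 Tr[(ψ^A)²] Tr[(ψ^R)²] ) ]^{1/4} ≤ √8 · 2^{−nδ/4}; consequently there exist a unitary U on A = A₁⊗A₂, a Hilbert space B̃ with d_{B̃} = d_{A₂}, and an isometry V : A₁⊗B → (A⊗B)⊗B̃ such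 that, after reordering tensor factors, ‖ (I⊗V)(I⊗U) ψ (I⊗U)†(I⊗V)† − ψ^{R(AB)} ⊗ Φ^{A₂B̃} ‖₁ ≤ √8 · 2^{−nδ/4}, where ψ^{R(AB)} is ψ regarded as a pure state on R tensored with the single system A⊗B. -/
open Matrix
open scoped Kronecker ComplexOrder

/-- The positive semidefinite square root of a positive semidefinite matrix
(as in the older Mathlib, which no longer has it; here over `ℂ`). -/
noncomputable def Matrix.PosSemidef.sqrt {n : Type*} [Fintype n] [DecidableEq n]
    {A : Matrix n n ℂ} (hA : A.PosSemidef) : Matrix n n ℂ :=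
  hA.1.eigenvectorUnitary.1 * Matrix.diagonal ((fun x : ℝ => (x : ℂ)) ∘ Real.sqrt ∘ hA.1.eigenvalues) *
    (star hA.1.eigenvectorUnitary : Matrix n n ℂ)

/-- Trace norm `‖M‖₁ = Tr √(Mᴴ M)` of a complex square matrix. -/
noncomputable def traceNorm {n : Type*} [Fintype n] [DecidableEq n] (M : Matrix n n ℂ) : ℝ :=
  ((Matrix.posSemidef_conjTranspose_mul_self M).sqrt.trace).re

/-- The unit vector `d^{-1/2} ∑ᵢ |i⟩|i⟩` of the maximally entangled state on `X ⊗ X'`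
(with `X' ≅ X`). -/
noncomputable def maxEntVec (α : Type*) [Fintype α] [DecidableEq α] : α × α → ℂ :=
  fun p => if p.1 = p.2 then ((Real.sqrt (Fintype.card α) : ℂ))⁻¹ else 0

/-- The maximally entangled (pure) state `Φ^{XX'}` on `X ⊗ X'`. -/
noncomputable def maxEntState (α : Type*) [Fintype α] [DecidableEq α] :
    Matrix (α × α) (α × α) ℂ :=
  Matrix.vecMulVec (maxEntVec α) (star (maxEntVec α))

/-- The pure state `|v⟩⟨v|` associated to a vector `v`. -/
noncomputable def pureState {ι : Type*} (v : ι → ℂ) : Matrix ι ι ℂ :=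
  Matrix.vecMulVec v (star v)

/-- Reduced state `ψ^{AR}` of a pure state on `R ⊗ (A × B)`; the partial trace over `B`. -/
noncomputable def redAR {ιR ιA ιB : Type} [Fintype ιB]
    (ψ : ιR × (ιA × ιB) → ℂ) : Matrix (ιA × ιR) (ιA × ιR) ℂ :=
  Matrix.of fun i j => ∑ b : ιB, ψ (i.2, (i.1, b)) * star (ψ (j.2, (j.1, b)))

/-- Reduced state `ψ^{A}` of a pure state on `R ⊗ (A × B)`. -/
noncomputable def redA {ιR ιA ιB : Type} [Fintype ιR] [Fintype ιB]
    (ψ : ιR × (ιA × ιB) → ℂ) : Matrix ιA ιA ℂ :=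
  Matrix.of fun i j => ∑ r : ιR, ∑ b : ιB, ψ (r, (i, b)) * star (ψ (r, (j, b)))

/-- Reduced state `ψ^{R}` of a pure state on `R ⊗ (A × B)`. -/
noncomputable def redR {ιR ιA ιB : Type} [Fintype ιA] [Fintype ιB]
    (ψ : ιR × (ιA × ιB) → ℂ) : Matrix ιR ιR ℂ :=
  Matrix.of fun i j => ∑ q : ιA × ιB, ψ (i, q) * star (ψ (j, q))

/-- Purity `Tr[ρ²]` of a state, as a real number. -/
noncomputable def purity {ι : Type*} [Fintype ι] (ρ : Matrix ι ι ℂ) : ℝ :=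
  (ρ * ρ).trace.re

/-- The combined isometry of the FQSW protocol: first `I_{RB} ⊗ U` (with `U : A → A₁A₂`),
then `I_{R A₂} ⊗ V` (with `V : A₁ ⊗ B → (A⊗B) ⊗ B̃` and `B̃` a copy of `A₂`), with the
output tensor factors reordered as `(R × (A × B)) × (A₂ × B̃)`. -/
noncomputable def fqswMap {ιR ιA₁ ιA₂ ιB : Type} [Fintype ιA₁] [DecidableEq ιR]
    (U : Matrix (ιA₁ × ιA₂) (ιA₁ × ιA₂) ℂ)
    (V : Matrix (((ιA₁ × ιA₂) × ιB) × ιA₂) (ιA₁ × ιB) ℂ) :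
    Matrix ((ιR × ((ιA₁ × ιA₂) × ιB)) × (ιA₂ × ιA₂)) (ιR × ((ιA₁ × ιA₂) × ιB)) ℂ :=
  Matrix.of fun p q =>
    if p.1.1 = q.1 then
      ∑ a₁ : ιA₁, V (p.1.2, p.2.2) (a₁, q.2.2) * U (a₁, p.2.1) q.2.1
    else 0

/-!
Averaging the purity of the `A₂R`-marginal of `U ψ^{AR} Uᴴ` over the unitaries `U = D₁ H P D₂`,
with `H` a flat (Fourier) unitary, `P` a permutation and `D₁`, `D₂` diagonal matrices of cube roots
of unity, already gives a decoupling bound: for some `U` the marginal lies within squared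
Hilbert–Schmidt distance `Tr[(ψ^{AR})²] / d_{A₁}` of `(1 / d_{A₂}) ⊗ ψ^R`. The encoded state
and `ψ ⊗ Φ` purify these two operators, so by Uhlmann's theorem an isometry on the purifying system
`A₁B` brings their overlap up to the fidelity. The Powers–Størmer argument bounds the fidelity below
by the Hilbert–Schmidt distance, and for pure states the overlap controls the trace distance. In
the i.i.d. regime only exponents of `2` remain to be compared.
-/

namespace FQSW

section HilbertSchmidt

variable {m n k : Type*} [Fintype m] [Fintype n] [Fintype k]

/-- The squared Hilbert–Schmidt norm `Tr[XᴴX]`. -/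
noncomputable def hsNormSq (X : Matrix m n ℂ) : ℝ :=
  (Xᴴ * X).trace.re

lemma hsNormSq_nonneg (X : Matrix m n ℂ) : 0 ≤ hsNormSq X :=
  (Complex.nonneg_iff.1 (posSemidef_conjTranspose_mul_self X).trace_nonneg).1

lemma ofReal_hsNormSq (X : Matrix m n ℂ) : (hsNormSq X : ℂ) = (Xᴴ * X).trace :=
  (Complex.ext rfl (Complex.nonneg_iff.1 (posSemidef_conjTranspose_mul_self X).trace_nonneg).2)

lemma hsNormSq_eq_sum (X : Matrix m n ℂ) : hsNormSq X = ∑ j, ∑ i, ‖X i j‖ ^ 2 := by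
  simp only [hsNormSq, trace, diag, mul_apply, conjTranspose_apply, Complex.re_sum,
    Complex.star_def, Complex.conj_mul', ← Complex.ofReal_pow, Complex.ofReal_re]

lemma hsNormSq_conjTranspose (X : Matrix m n ℂ) : hsNormSq Xᴴ = hsNormSq X := by
  rw [hsNormSq, hsNormSq, conjTranspose_conjTranspose, trace_mul_comm]

lemma hsNormSq_mul_of_isometry [DecidableEq k] {W : Matrix m k ℂ} (hW : Wᴴ * W = 1)
    (X : Matrix k n ℂ) : hsNormSq (W * X) = hsNormSq X := by
  rw [hsNormSq, hsNormSq, conjTranspose_mul, Matrix.mul_assoc, ← Matrix.mul_assoc Wᴴ, hW,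
    Matrix.one_mul]

lemma hsNormSq_sub (X Y : Matrix m n ℂ) :
    hsNormSq (X - Y) = hsNormSq X + hsNormSq Y - 2 * (Xᴴ * Y).trace.re := by
  have hre : (Yᴴ * X).trace.re = (Xᴴ * Y).trace.re := by
    rw [← conjTranspose_conjTranspose X, ← conjTranspose_mul, trace_conjTranspose]
    simp
  simp only [hsNormSq, conjTranspose_sub, Matrix.sub_mul, Matrix.mul_sub, trace_sub,
    Complex.sub_re, hre]
  ring

lemma two_mul_re_trace_le (X Y : Matrix m n ℂ) :
    2 * (Xᴴ * Y).trace.re ≤ hsNormSq X + hsNormSq Y := by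
  linarith [hsNormSq_nonneg (X - Y), hsNormSq_sub X Y]

lemma purity_eq_hsNormSq {ρ : Matrix n n ℂ} (hρ : ρ.IsHermitian) : purity ρ = hsNormSq ρ := by
  rw [purity, hsNormSq, hρ.eq]

lemma purity_nonneg {ρ : Matrix n n ℂ} (hρ : ρ.IsHermitian) : 0 ≤ purity ρ :=
  purity_eq_hsNormSq hρ ▸ hsNormSq_nonneg ρ

end HilbertSchmidt

section TraceNorm

variable {n : Type*}

lemma isHermitian_pureState (v : n → ℂ) : (pureState v).IsHermitian := by
  rw [IsHermitian, pureState, conjTranspose_vecMulVec, star_star]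

lemma rank_add_le {m : Type*} [Fintype n] (A B : Matrix m n ℂ) :
    (A + B).rank ≤ A.rank + B.rank := by
  rw [rank, rank, rank, mulVecLin_add]
  refine (Submodule.finrank_mono (LinearMap.range_add_le _ _)).trans ?_
  exact Submodule.finrank_add_le_finrank_add_finrank _ _

variable [Fintype n]

lemma rank_pureState_sub_le (x y : n → ℂ) : (pureState x - pureState y).rank ≤ 2 := by
  have hsub : pureState x - pureState y = vecMulVec x (star x) + vecMulVec (-y) (star y) := by
    rw [pureState, pureState, neg_vecMulVec, sub_eq_add_neg]
  rw [hsub]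
  exact (rank_add_le _ _).trans (add_le_add (rank_vecMulVec_le _ _) (rank_vecMulVec_le _ _))

lemma hsNormSq_pureState_sub {x y : n → ℂ} (hx : star x ⬝ᵥ x = 1) (hy : star y ⬝ᵥ y = 1) :
    hsNormSq (pureState x - pureState y) = 2 - 2 * ‖star y ⬝ᵥ x‖ ^ 2 := by
  have hmul (u v : n → ℂ) : (pureState u * pureState v).trace = ‖star u ⬝ᵥ v‖ ^ 2 := by
    rw [pureState, pureState, vecMulVec_mul_vecMulVec, trace_vecMulVec, dotProduct_smul,
      smul_eq_mul, ← Complex.mul_conj', ← Complex.star_def, star_dotProduct, star_star,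
      dotProduct_comm u]
  have hpure {v : n → ℂ} (hv : star v ⬝ᵥ v = 1) : hsNormSq (pureState v) = 1 := by
    rw [hsNormSq, isHermitian_pureState v, hmul, hv]
    simp
  have hcross : (pureState x * pureState y).trace.re = ‖star y ⬝ᵥ x‖ ^ 2 := by
    rw [trace_mul_comm, hmul]
    exact_mod_cast Complex.ofReal_re _
  rw [hsNormSq_sub, hpure hx, hpure hy, isHermitian_pureState x, hcross]
  ring

variable [DecidableEq n]

lemma traceNorm_sq_le (M : Matrix n n ℂ) : traceNorm M ^ 2 ≤ M.rank * hsNormSq M := by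
  have hM := posSemidef_conjTranspose_mul_self M
  set l := hM.1.eigenvalues
  have htrace : traceNorm M = ∑ i, √(l i) := by
    rw [traceNorm, PosSemidef.sqrt, trace_mul_cycle, Unitary.coe_star_mul_self, Matrix.one_mul,
      trace_diagonal]
    simp [l]
  have hhs : hsNormSq M = ∑ i, l i := by
    rw [hsNormSq, hM.1.trace_eq_sum_eigenvalues]
    simp [l]
  have hrank : M.rank = (Finset.univ.filter (l · ≠ 0)).card := by
    rw [← rank_conjTranspose_mul_self, hM.1.rank_eq_card_non_zero_eigs, Fintype.card_subtype]
  calc traceNorm M ^ 2 = (∑ i with l i ≠ 0, √(l i)) ^ 2 := by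
        rw [htrace, Finset.sum_filter_of_ne]
        exact fun i _ hi h0 => hi (by rw [h0, Real.sqrt_zero])
    _ ≤ M.rank * ∑ i with l i ≠ 0, √(l i) ^ 2 := hrank ▸ sq_sum_le_card_mul_sum_sq
    _ = M.rank * hsNormSq M := by
        rw [hhs, ← Finset.sum_filter_ne_zero (f := l)]
        simp only [Real.sq_sqrt (hM.eigenvalues_nonneg _), l]

lemma traceNorm_pureState_sub_le {x y : n → ℂ} (hx : star x ⬝ᵥ x = 1) (hy : star y ⬝ᵥ y = 1) :
    traceNorm (pureState x - pureState y) ≤ 2 * √(1 - ‖star y ⬝ᵥ x‖ ^ 2) := by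
  have hrank : ((pureState x - pureState y).rank : ℝ) ≤ 2 := by
    exact_mod_cast rank_pureState_sub_le x y
  have hsq : traceNorm (pureState x - pureState y) ^ 2 ≤ 2 ^ 2 * (1 - ‖star y ⬝ᵥ x‖ ^ 2) := by
    calc _ ≤ _ := traceNorm_sq_le _
      _ ≤ 2 * hsNormSq (pureState x - pureState y) := by gcongr; exact hsNormSq_nonneg _
      _ = _ := by rw [hsNormSq_pureState_sub hx hy]; ring
  calc _ ≤ √(2 ^ 2 * (1 - ‖star y ⬝ᵥ x‖ ^ 2)) := Real.le_sqrt_of_sq_le hsq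
    _ = _ := by rw [Real.sqrt_mul (by positivity), Real.sqrt_sq (by positivity)]

end TraceNorm

section PowersStormer

variable {p : Type*} [Fintype p] {A B : Matrix p p ℂ}

lemma sq_le_norm_mul_self_sub_of_sub_eq_diagonal [DecidableEq p] (hA : A.PosSemidef)
    (hB : B.PosSemidef) {l : p → ℝ} (hAB : A - B = diagonal fun i => (l i : ℂ)) (i : p) :
    l i ^ 2 ≤ ‖(A * A - B * B) i i‖ := by
  obtain ⟨hA0, -⟩ := Complex.nonneg_iff.1 (hA.diag_nonneg (i := i))
  obtain ⟨hB0, -⟩ := Complex.nonneg_iff.1 (hB.diag_nonneg (i := i))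
  have hentry : (A i i).re - (B i i).re = l i := by
    simpa using congrArg Complex.re (congrFun₂ hAB i i)
  have hsymm : (2 : ℂ) • (A * A - B * B) = (A - B) * (A + B) + (A + B) * (A - B) := by
    rw [two_smul]
    noncomm_ring
  have hdiag : (A * A - B * B) i i = l i * (A i i + B i i) := by
    have h := congrFun₂ hsymm i i
    rw [hAB] at h
    simp only [Matrix.smul_apply, Matrix.add_apply, diagonal_mul, mul_diagonal, smul_eq_mul] at h
    linear_combination h / 2
  have habs : |l i| ≤ (A i i).re + (B i i).re := abs_le.2 ⟨by linarith, by linarith⟩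
  calc l i ^ 2 = |l i| * |l i| := by rw [← sq, sq_abs]
    _ ≤ |l i| * ((A i i).re + (B i i).re) := by gcongr
    _ = |((A * A - B * B) i i).re| := by
        rw [hdiag, Complex.re_ofReal_mul, Complex.add_re, abs_mul,
          abs_of_nonneg (add_nonneg hA0 hB0)]
    _ ≤ ‖(A * A - B * B) i i‖ := Complex.abs_re_le_norm _

lemma sq_hsNormSq_sub_le_of_sub_eq_diagonal [DecidableEq p] (hA : A.PosSemidef) (hB : B.PosSemidef)
    {l : p → ℝ} (hAB : A - B = diagonal fun i => (l i : ℂ)) :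
    hsNormSq (A - B) ^ 2 ≤ Fintype.card p * hsNormSq (A * A - B * B) := by
  have hsum : hsNormSq (A - B) = ∑ i, l i ^ 2 := by
    rw [hAB, hsNormSq, diagonal_conjTranspose, diagonal_mul_diagonal, trace_diagonal]
    simp [sq]
  calc hsNormSq (A - B) ^ 2 ≤ (∑ i, ‖(A * A - B * B) i i‖) ^ 2 := by
        rw [hsum]
        gcongr with i
        exact sq_le_norm_mul_self_sub_of_sub_eq_diagonal hA hB hAB i
    _ ≤ Fintype.card p * ∑ i, ‖(A * A - B * B) i i‖ ^ 2 := sq_sum_le_card_mul_sum_sq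
    _ ≤ Fintype.card p * hsNormSq (A * A - B * B) := by
        rw [hsNormSq_eq_sum]
        gcongr with i
        exact Finset.single_le_sum (f := fun j => ‖(A * A - B * B) j i‖ ^ 2)
          (fun j _ => by positivity) (Finset.mem_univ i)

-- Passing to an eigenbasis of `A - B` changes neither side.
lemma sq_hsNormSq_sub_le (hA : A.PosSemidef) (hB : B.PosSemidef) :
    hsNormSq (A - B) ^ 2 ≤ Fintype.card p * hsNormSq (A * A - B * B) := by
  classical
  have hAB : (A - B).IsHermitian := hA.1.sub hB.1
  let W : Matrix p p ℂ := hAB.eigenvectorUnitary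
  have hW : W * Wᴴ = 1 := Unitary.coe_mul_star_self hAB.eigenvectorUnitary
  have hconj (X Y : Matrix p p ℂ) : Wᴴ * X * W * (Wᴴ * Y * W) = Wᴴ * (X * Y) * W := by
    rw [show Wᴴ * X * W * (Wᴴ * Y * W) = Wᴴ * X * (W * Wᴴ) * Y * W by
      simp only [Matrix.mul_assoc], hW, Matrix.mul_one, Matrix.mul_assoc Wᴴ X]
  have hnorm (X : Matrix p p ℂ) : hsNormSq (Wᴴ * X * W) = hsNormSq X := by
    rw [Matrix.mul_assoc, hsNormSq_mul_of_isometry (by rwa [conjTranspose_conjTranspose]),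
      ← hsNormSq_conjTranspose, conjTranspose_mul,
      hsNormSq_mul_of_isometry (by rwa [conjTranspose_conjTranspose]), hsNormSq_conjTranspose]
  have hdiag : Wᴴ * A * W - Wᴴ * B * W = diagonal fun i => (hAB.eigenvalues i : ℂ) := by
    rw [← Matrix.sub_mul, ← Matrix.mul_sub]
    have h := hAB.conjStarAlgAut_star_eigenvectorUnitary
    rwa [Unitary.conjStarAlgAut_star_apply] at h
  have h := sq_hsNormSq_sub_le_of_sub_eq_diagonal (hA.conjTranspose_mul_mul_same W)
    (hB.conjTranspose_mul_mul_same W) hdiag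
  simpa only [hconj, ← Matrix.sub_mul, ← Matrix.mul_sub, hnorm] using h

end PowersStormer

section Uhlmann

open scoped MatrixOrder Matrix.Norms.L2Operator

lemma exists_linearIsometry_of_norm_eq {𝕜 E F : Type*} [RCLike 𝕜] [AddCommGroup E] [Module 𝕜 E]
    [NormedAddCommGroup F] [InnerProductSpace 𝕜 F] [FiniteDimensional 𝕜 F] {f g : E →ₗ[𝕜] F}
    (hfg : ∀ x, ‖f x‖ = ‖g x‖) : ∃ L : F →ₗᵢ[𝕜] F, ∀ x, g x = L (f x) := by
  obtain ⟨s, hs⟩ := f.rangeRestrict.exists_rightInverse_of_surjective f.range_rangeRestrict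
  have hfs (y : f.range) : f (s y) = y := congrArg Subtype.val (LinearMap.congr_fun hs y)
  let L : f.range →ₗᵢ[𝕜] F := ⟨g ∘ₗ s, fun y => by simp [← hfg, hfs]⟩
  refine ⟨L.extend, fun x => ?_⟩
  have hx : g (s (f.rangeRestrict x) - x) = 0 := by
    rw [← norm_eq_zero, ← hfg, map_sub, norm_eq_zero, sub_eq_zero]
    exact hfs (f.rangeRestrict x)
  rw [map_sub, sub_eq_zero] at hx
  exact hx.symm.trans (L.extend_apply (f.rangeRestrict x)).symm

variable {m n k q : Type*} [Fintype m] [Fintype n] [Fintype k]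

lemma exists_isometry_of_card_le [DecidableEq k] (hkm : Fintype.card k ≤ Fintype.card m) :
    ∃ E : Matrix m k ℂ, Eᴴ * E = 1 := by
  classical
  obtain ⟨e⟩ := Function.Embedding.nonempty_of_card_le hkm
  refine ⟨(1 : Matrix m m ℂ).submatrix id e, ?_⟩
  rw [conjTranspose_submatrix, conjTranspose_one, ← submatrix_mul _ _ _ _ _ Function.bijective_id,
    Matrix.one_mul, submatrix_one_embedding]

lemma exists_isometry_mul_eq_of_conjTranspose_mul_self_eq [Finite q] [DecidableEq m]
    {X Y : Matrix m q ℂ} (hXY : Xᴴ * X = Yᴴ * Y) : ∃ W : Matrix m m ℂ, Wᴴ * W = 1 ∧ Y = W * X := by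
  classical
  cases nonempty_fintype q
  have hsq (Z : Matrix m q ℂ) (x : EuclideanSpace ℂ q) :
      (‖toEuclideanLin Z x‖ ^ 2 : ℂ) = inner ℂ x (toEuclideanLin (Zᴴ * Z) x) := by
    rw [toLpLin_mul 2 2 2, LinearMap.comp_apply, toEuclideanLin_conjTranspose_eq_adjoint,
      LinearMap.adjoint_inner_right, inner_self_eq_norm_sq_to_K]
    rfl
  have hnorm (x : EuclideanSpace ℂ q) : ‖toEuclideanLin X x‖ = ‖toEuclideanLin Y x‖ := by
    have h := hsq X x
    rw [hXY, ← hsq] at h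
    exact (sq_eq_sq₀ (norm_nonneg _) (norm_nonneg _)).1 (by exact_mod_cast h)
  obtain ⟨L, hL⟩ := exists_linearIsometry_of_norm_eq hnorm
  let W : Matrix m m ℂ := toEuclideanLin.symm L.toLinearMap
  have hW : toEuclideanLin W = L.toLinearMap := LinearEquiv.apply_symm_apply _ _
  refine ⟨W, toEuclideanLin.injective ?_, toEuclideanLin.injective ?_⟩
  · rw [toLpLin_mul 2 2 2, toEuclideanLin_conjTranspose_eq_adjoint, hW,
      L.adjoint_comp_self', toLpLin_one]
  · rw [toLpLin_mul 2 2 2, hW]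
    exact LinearMap.ext hL

lemma exists_isometry_mul_eq_of_card_le [Finite q] [DecidableEq k]
    (hkm : Fintype.card k ≤ Fintype.card m) {X : Matrix k q ℂ} {Y : Matrix m q ℂ}
    (hXY : Xᴴ * X = Yᴴ * Y) : ∃ W : Matrix m k ℂ, Wᴴ * W = 1 ∧ Y = W * X := by
  classical
  obtain ⟨E, hE⟩ := exists_isometry_of_card_le hkm
  have hEX : (E * X)ᴴ * (E * X) = Yᴴ * Y := by
    rw [conjTranspose_mul, Matrix.mul_assoc, ← Matrix.mul_assoc Eᴴ, hE, Matrix.one_mul, hXY]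
  obtain ⟨W, hW, hY⟩ := exists_isometry_mul_eq_of_conjTranspose_mul_self_eq hEX
  refine ⟨W * E, ?_, by rw [hY, Matrix.mul_assoc]⟩
  rw [conjTranspose_mul, Matrix.mul_assoc, ← Matrix.mul_assoc Wᴴ, hW, Matrix.one_mul, hE]

lemma norm_le_one_of_isometry [DecidableEq k] {W : Matrix m k ℂ} (hW : Wᴴ * W = 1) :
    ‖W‖ ≤ 1 := by
  have hsq : ‖W‖ * ‖W‖ ≤ 1 := by
    rw [← l2_opNorm_conjTranspose_mul_self, hW, ← diagonal_one, l2_opNorm_diagonal]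
    exact (pi_norm_const_le _).trans_eq norm_one
  exact abs_le_one_iff_mul_self_le_one.2 hsq |>.trans' (le_abs_self _)

lemma exists_norm_le_one_mul_eq [Finite q] [DecidableEq k] {X : Matrix k q ℂ}
    {Y : Matrix m q ℂ} (hXY : Xᴴ * X = Yᴴ * Y) : ∃ K : Matrix m k ℂ, ‖K‖ ≤ 1 ∧ Y = K * X := by
  classical
  let Z : Matrix (m ⊕ k) q ℂ := fromRows Y 0
  let E : Matrix (m ⊕ k) m ℂ := fromRows 1 0
  have hZ : Zᴴ * Z = Yᴴ * Y := by
    simp only [Z, conjTranspose_fromRows_eq_fromCols_conjTranspose, fromCols_mul_fromRows,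
      conjTranspose_zero, Matrix.mul_zero, add_zero]
  have hE : Eᴴ * E = 1 := by
    simp only [E, conjTranspose_fromRows_eq_fromCols_conjTranspose, fromCols_mul_fromRows,
      conjTranspose_zero, Matrix.mul_zero, add_zero, conjTranspose_one, Matrix.one_mul]
  have hEZ : Eᴴ * Z = Y := by
    simp only [E, Z, conjTranspose_fromRows_eq_fromCols_conjTranspose, fromCols_mul_fromRows,
      conjTranspose_zero, Matrix.mul_zero, add_zero, conjTranspose_one, Matrix.one_mul]
  obtain ⟨W, hW, hWX⟩ := exists_isometry_mul_eq_of_card_le (by simp) (hXY.trans hZ.symm)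
  refine ⟨Eᴴ * W, ?_, by rw [Matrix.mul_assoc, ← hWX, hEZ]⟩
  calc ‖Eᴴ * W‖ ≤ ‖Eᴴ‖ * ‖W‖ := l2_opNorm_mul _ _
    _ ≤ 1 := mul_le_one₀ ((l2_opNorm_conjTranspose E).trans_le (norm_le_one_of_isometry hE))
      (norm_nonneg W) (norm_le_one_of_isometry hW)

lemma hsNormSq_mul_le [DecidableEq k] (C : Matrix m k ℂ) (X : Matrix k n ℂ) :
    hsNormSq (C * X) ≤ ‖C‖ ^ 2 * hsNormSq X := by
  have hcol (j : n) : ∑ i, ‖(C * X) i j‖ ^ 2 ≤ ‖C‖ ^ 2 * ∑ i, ‖X i j‖ ^ 2 := by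
    have h := pow_le_pow_left₀ (norm_nonneg _) (l2_opNorm_mulVec C (WithLp.toLp 2 fun i => X i j)) 2
    rwa [mul_pow, EuclideanSpace.norm_sq_eq, EuclideanSpace.norm_sq_eq] at h
  rw [hsNormSq_eq_sum, hsNormSq_eq_sum, Finset.mul_sum]
  exact Finset.sum_le_sum fun j _ => hcol j

lemma exists_posSemidef_mul_self_eq {A : Matrix n n ℂ} (hA : A.PosSemidef) :
    ∃ P : Matrix n n ℂ, P.PosSemidef ∧ P * P = A := by
  classical
  exact ⟨CFC.sqrt A, nonneg_iff_posSemidef.1 (CFC.sqrt_nonneg A),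
    CFC.sqrt_mul_sqrt_self A (nonneg_iff_posSemidef.2 hA)⟩

lemma re_trace_mul_le_of_norm_le_one [DecidableEq n] {C P : Matrix n n ℂ} (hC : ‖C‖ ≤ 1)
    (hP : P.PosSemidef) : (C * P).trace.re ≤ P.trace.re := by
  obtain ⟨Q, hQ, rfl⟩ := exists_posSemidef_mul_self_eq hP
  have hCQ : hsNormSq (C * Q) ≤ hsNormSq Q :=
    (hsNormSq_mul_le C Q).trans <|
      mul_le_of_le_one_left (hsNormSq_nonneg Q) (pow_le_one₀ (norm_nonneg C) hC)
  have hamgm := two_mul_re_trace_le Q (C * Q)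
  rw [hQ.1.eq, trace_mul_comm, Matrix.mul_assoc] at hamgm
  have hQQ : (Q * Q).trace.re = hsNormSq Q := by rw [hsNormSq, hQ.1.eq]
  linarith

-- The maximizing isometry is the polar factor of `X`.
lemma exists_isometry_re_trace_mul_le [DecidableEq n]
    (hnm : Fintype.card n ≤ Fintype.card m) (X : Matrix m n ℂ) :
    ∃ W : Matrix m n ℂ, Wᴴ * W = 1 ∧
      ∀ K : Matrix m n ℂ, ‖K‖ ≤ 1 → (X * Kᴴ).trace.re ≤ (X * Wᴴ).trace.re := by
  classical
  obtain ⟨P, hP, hPX⟩ := exists_posSemidef_mul_self_eq (posSemidef_conjTranspose_mul_self X)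
  obtain ⟨W, hW, rfl⟩ := exists_isometry_mul_eq_of_card_le (X := P) hnm (by rw [hP.1.eq, hPX])
  refine ⟨W, hW, fun K hK => ?_⟩
  have hKW : ‖Kᴴ * W‖ ≤ 1 := by
    calc ‖Kᴴ * W‖ ≤ ‖Kᴴ‖ * ‖W‖ := l2_opNorm_mul _ _
      _ ≤ 1 := mul_le_one₀ ((l2_opNorm_conjTranspose K).trans_le hK) (norm_nonneg W)
        (norm_le_one_of_isometry hW)
  rw [trace_mul_cycle W P Kᴴ, trace_mul_cycle W P Wᴴ, hW, Matrix.one_mul]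
  exact re_trace_mul_le_of_norm_le_one hKW hP

lemma exists_isometry_re_trace_mul_le_of_mul_self_eq [DecidableEq n]
    (hnm : Fintype.card n ≤ Fintype.card m) {M₁ : Matrix k n ℂ} {M₂ : Matrix k m ℂ}
    {A B : Matrix k k ℂ} (hA : A.IsHermitian) (hB : B.IsHermitian)
    (hA₁ : A * A = M₁ * M₁ᴴ) (hB₂ : B * B = M₂ * M₂ᴴ) :
    ∃ W : Matrix m n ℂ, Wᴴ * W = 1 ∧ (B * A).trace.re ≤ (M₂ᴴ * M₁ * Wᴴ).trace.re := by
  classical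
  obtain ⟨C₁, hC₁, hAC⟩ := exists_norm_le_one_mul_eq (X := M₁ᴴ) (Y := A)
    (by rw [conjTranspose_conjTranspose, hA.eq, hA₁])
  obtain ⟨C₂, hC₂, hBC⟩ := exists_norm_le_one_mul_eq (X := M₂ᴴ) (Y := B)
    (by rw [conjTranspose_conjTranspose, hB.eq, hB₂])
  obtain ⟨W, hW, hmax⟩ := exists_isometry_re_trace_mul_le hnm (M₂ᴴ * M₁)
  refine ⟨W, hW, ?_⟩
  have hBA : (B * A).trace = (M₂ᴴ * M₁ * (C₂ᴴ * C₁)ᴴ).trace := by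
    rw [← hA.eq, hAC, hBC, conjTranspose_mul, conjTranspose_conjTranspose, conjTranspose_mul,
      conjTranspose_conjTranspose, Matrix.mul_assoc C₂, trace_mul_comm C₂]
    simp only [Matrix.mul_assoc]
  rw [hBA]
  refine hmax _ ?_
  calc ‖C₂ᴴ * C₁‖ ≤ ‖C₂ᴴ‖ * ‖C₁‖ := l2_opNorm_mul _ _
    _ ≤ 1 := mul_le_one₀ ((l2_opNorm_conjTranspose C₂).trans_le hC₂) (norm_nonneg C₁) hC₁

-- Uhlmann's theorem, with the fidelity bounded below through Powers–Størmer.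
lemma exists_isometry_one_sub_le_re_trace [DecidableEq n]
    (hnm : Fintype.card n ≤ Fintype.card m) {M₁ : Matrix k n ℂ} {M₂ : Matrix k m ℂ}
    (hM₁ : hsNormSq M₁ = 1) (hM₂ : hsNormSq M₂ = 1) {ε : ℝ} (hε : 0 ≤ ε)
    (hM : Fintype.card k * hsNormSq (M₁ * M₁ᴴ - M₂ * M₂ᴴ) ≤ ε ^ 2) :
    ∃ W : Matrix m n ℂ, Wᴴ * W = 1 ∧ 1 - ε / 2 ≤ (M₂ᴴ * M₁ * Wᴴ).trace.re := by
  obtain ⟨A, hA, hA₁⟩ := exists_posSemidef_mul_self_eq (posSemidef_self_mul_conjTranspose M₁)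
  obtain ⟨B, hB, hB₂⟩ := exists_posSemidef_mul_self_eq (posSemidef_self_mul_conjTranspose M₂)
  obtain ⟨W, hW, hle⟩ :=
    exists_isometry_re_trace_mul_le_of_mul_self_eq hnm hA.1 hB.1 hA₁ hB₂
  have hAB : hsNormSq (A - B) ≤ ε := by
    refine abs_le_of_sq_le_sq ((sq_hsNormSq_sub_le hA hB).trans ?_) hε |>.trans' (le_abs_self _)
    rwa [hA₁, hB₂]
  have hA_norm : hsNormSq A = 1 := by
    rw [← hM₁, ← hsNormSq_conjTranspose M₁, hsNormSq, hsNormSq, hA.1.eq, hA₁,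
      conjTranspose_conjTranspose]
  have hB_norm : hsNormSq B = 1 := by
    rw [← hM₂, ← hsNormSq_conjTranspose M₂, hsNormSq, hsNormSq, hB.1.eq, hB₂,
      conjTranspose_conjTranspose]
  rw [hsNormSq_sub, hA_norm, hB_norm, hA.1.eq, trace_mul_comm] at hAB
  exact ⟨W, hW, by linarith⟩

end Uhlmann

section Averaging

open scoped BigOperators

lemma exists_re_le_of_expect {X : Type*} [Fintype X] [Nonempty X] {f : X → ℂ} {z : ℂ}
    (h : 𝔼 x, f x = z) : ∃ x, (f x).re ≤ z.re := by
  obtain ⟨x, -, hx⟩ := Finset.exists_le_of_expect_le (f := fun x => (f x).re)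
    Finset.univ_nonempty ((Complex.re_expect _ f).symm.trans (congrArg Complex.re h)).le
  exact ⟨x, hx⟩

lemma expect_smul_eq_expect {G X M : Type*} [Group G] [Fintype G] [MulAction G X] [AddCommMonoid M]
    [Module ℚ≥0 M] {s : Finset X} (hs : ∀ g : G, ∀ y, g • y ∈ s ↔ y ∈ s)
    (htrans : ∀ y ∈ s, ∀ z ∈ s, ∃ g : G, g • y = z) (f : X → M) {x : X} (hx : x ∈ s) :
    𝔼 g : G, f (g • x) = 𝔼 y ∈ s, f y := by
  have horbit : ∀ y ∈ s, 𝔼 g : G, f (g • y) = 𝔼 g : G, f (g • x) := by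
    intro y hy
    obtain ⟨h, rfl⟩ := htrans x hx y hy
    exact Fintype.expect_equiv (Equiv.mulRight h) _ _ fun g => by simp [mul_smul]
  calc 𝔼 g : G, f (g • x)
      = 𝔼 y ∈ s, 𝔼 g : G, f (g • y) := by
        rw [Finset.expect_congr rfl horbit, Finset.expect_const ⟨x, hx⟩]
    _ = 𝔼 g : G, 𝔼 y ∈ s, f (g • y) := Finset.expect_comm ..
    _ = 𝔼 _g : G, 𝔼 y ∈ s, f y := Finset.expect_congr rfl fun g _ =>
        Finset.expect_equiv (MulAction.toPerm g) (fun y => (hs g y).symm) fun _ _ => rfl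
    _ = 𝔼 y ∈ s, f y := Fintype.expect_const _

variable {ι : Type*} [Fintype ι] [DecidableEq ι]

lemma expect_perm_apply_apply (f : ι → ι → ℂ) {i k : ι} (hik : i ≠ k) :
    𝔼 π : Equiv.Perm ι, f (π i) (π k) = 𝔼 x ∈ Finset.offDiag .univ, f x.1 x.2 := by
  refine expect_smul_eq_expect (G := Equiv.Perm ι) (s := Finset.offDiag .univ) (x := (i, k))
    (by simp) ?_ (fun x => f x.1 x.2) (by simpa)
  rintro ⟨a, b⟩ hab ⟨c, d⟩ hcd
  simp only [Finset.mem_offDiag, Finset.mem_univ, true_and] at hab hcd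
  obtain ⟨π, hac, hbd⟩ := MulAction.is_two_pretransitive_iff.1
    (Equiv.Perm.isMultiplyPretransitive ι 2) hab hcd
  exact ⟨π, Prod.ext hac hbd⟩

lemma expect_perm_apply (f : ι → ℂ) (i : ι) : 𝔼 π : Equiv.Perm ι, f (π i) = 𝔼 j, f j :=
  expect_smul_eq_expect (by simp) (fun y _ z _ => ⟨Equiv.swap y z, Equiv.swap_apply_left y z⟩) f
    (Finset.mem_univ i)

lemma sum_sum_eq_sum_offDiag_add {ι M : Type*} [Fintype ι] [AddCommMonoid M] (f : ι → ι → M) :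
    ∑ i, ∑ k, f i k = ∑ x ∈ Finset.offDiag .univ, f x.1 x.2 + ∑ i, f i i := by
  classical
  rw [← Finset.sum_product', ← Finset.diag_union_offDiag,
    Finset.sum_union (Finset.disjoint_diag_offDiag _), add_comm]
  simp [Finset.sum_diag]

end Averaging

section Phases

open scoped BigOperators

variable {ι : Type*}

/-- The vector of cube roots of unity `exp (2πi θᵢ / 3)`, the random phases of the averaging
argument. -/
noncomputable def phase (θ : ι → ZMod 3) (i : ι) : ℂ :=
  ZMod.stdAddChar (θ i)

lemma star_phase (θ : ι → ZMod 3) (i : ι) : star (phase θ i) = ZMod.stdAddChar (-θ i) :=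
  (AddChar.map_neg_eq_conj _ _).symm

lemma star_phase_mul_self (θ : ι → ZMod 3) (i : ι) : star (phase θ i) * phase θ i = 1 := by
  rw [star_phase, phase, ← AddChar.map_add_eq_mul, neg_add_cancel, AddChar.map_zero_eq_one]

lemma conjTranspose_diagonal_phase_mul_self [Fintype ι] [DecidableEq ι] (θ : ι → ZMod 3) :
    (diagonal (phase θ))ᴴ * diagonal (phase θ) = 1 := by
  rw [diagonal_conjTranspose, diagonal_mul_diagonal, ← diagonal_one]
  exact congrArg diagonal (funext (star_phase_mul_self θ))

-- Modulo 2 the pairing `i = k`, `j = l` would also pass this test, hence cube roots of unity.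
lemma forall_sub_add_sub_eq_zero_iff (i j k l : ι) :
    (∀ θ : ι → ZMod 3, θ i - θ j + θ k - θ l = 0) ↔ i = j ∧ k = l ∨ i = l ∧ j = k := by
  classical
  refine ⟨fun h => ?_, ?_⟩
  · have hj := h (Pi.single j 1)
    have hl := h (Pi.single l 1)
    have : (1 : ZMod 3) ≠ 0 ∧ (1 + 1 : ZMod 3) ≠ 0 := by decide
    simp only [Pi.single_apply] at hj hl
    grind
  · rintro (⟨rfl, rfl⟩ | ⟨rfl, rfl⟩) θ <;> ring

variable [Fintype ι] [DecidableEq ι]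

lemma expect_phase_mul (i j k l : ι) :
    𝔼 θ : ι → ZMod 3, phase θ i * star (phase θ j) * phase θ k * star (phase θ l) =
      if i = j ∧ k = l ∨ i = l ∧ j = k then 1 else 0 := by
  let φ : (ι → ZMod 3) →+ ZMod 3 :=
    let ev := Pi.evalAddMonoidHom (fun _ : ι => ZMod 3)
    ev i - ev j + ev k - ev l
  have hφ (θ : ι → ZMod 3) : φ θ = θ i - θ j + θ k - θ l := rfl
  have hterm (θ : ι → ZMod 3) : phase θ i * star (phase θ j) * phase θ k * star (phase θ l) =
      ZMod.stdAddChar.compAddMonoidHom φ θ := by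
    rw [AddChar.compAddMonoidHom_apply, hφ, star_phase, star_phase, phase, phase,
      ← AddChar.map_add_eq_mul, ← AddChar.map_add_eq_mul, ← AddChar.map_add_eq_mul]
    simp only [sub_eq_add_neg]
  have htriv : (ZMod.stdAddChar (N := 3)).compAddMonoidHom φ = 0 ↔
      ∀ θ : ι → ZMod 3, θ i - θ j + θ k - θ l = 0 := by
    simp only [AddChar.eq_zero_iff, AddChar.compAddMonoidHom_apply, hφ,
      ZMod.injective_stdAddChar.eq_iff' (AddChar.map_zero_eq_one _)]
  simp only [hterm, AddChar.expect_eq_ite, htriv, forall_sub_add_sub_eq_zero_iff]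

lemma sum_ite_pairing (f : ι → ι → ι → ι → ℂ) :
    ∑ i, ∑ j, ∑ k, ∑ l, (if i = j ∧ k = l ∨ i = l ∧ j = k then f i j k l else 0) =
      ∑ x ∈ Finset.offDiag .univ, (f x.1 x.1 x.2 x.2 + f x.1 x.2 x.2 x.1) + ∑ i, f i i i i := by
  have hsplit (i j k l : ι) : (if i = j ∧ k = l ∨ i = l ∧ j = k then f i j k l else 0) =
      (if i = j then if k = l then f i i k k else 0 else 0) +
        (if i = l then if j = k then f i j j i else 0 else 0) -
        (if i = j then if i = k then if i = l then f i i i i else 0 else 0 else 0) := by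
    grind
  simp only [hsplit, Finset.sum_add_distrib, Finset.sum_sub_distrib]
  simp only [Finset.sum_ite_irrel, Finset.sum_const_zero, Finset.sum_ite_eq, Finset.mem_univ,
    if_true, sum_sum_eq_sum_offDiag_add fun i k => f i i k k,
    sum_sum_eq_sum_offDiag_add fun i k => f i k k i]
  ring

end Phases

section MarginalUnits

variable {α β ι : Type*} [Fintype α]

/-- The partial trace over `α` of `U |i⟩⟨j| Uᴴ`. -/
noncomputable def marginalUnit (U : Matrix (α × β) ι ℂ) (i j : ι) : Matrix β β ℂ :=
  of fun m m' => ∑ a, U (a, m) i * star (U (a, m') j)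

lemma trace_marginalUnit [Fintype β] [DecidableEq ι] {U : Matrix (α × β) ι ℂ} (hU : Uᴴ * U = 1)
    (i j : ι) : (marginalUnit U i j).trace = if i = j then 1 else 0 := by
  calc (marginalUnit U i j).trace
      = (Uᴴ * U) j i := by
        simp only [marginalUnit, trace, diag, of_apply, mul_apply, conjTranspose_apply,
          Fintype.sum_prod_type_right, mul_comm]
    _ = if i = j then 1 else 0 := by
        simp only [hU, one_apply, eq_comm]

lemma sum_marginalUnit [Fintype ι] [DecidableEq α] [DecidableEq β] {U : Matrix (α × β) ι ℂ}
    (hU : U * Uᴴ = 1) : ∑ i, marginalUnit U i i = (Fintype.card α : ℂ) • 1 := by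
  ext m m'
  calc (∑ i, marginalUnit U i i) m m'
      = ∑ a, (U * Uᴴ) (a, m) (a, m') := by
        simp only [Matrix.sum_apply, marginalUnit, of_apply, mul_apply, conjTranspose_apply]
        exact Finset.sum_comm
    _ = ((Fintype.card α : ℂ) • (1 : Matrix β β ℂ)) m m' := by
        simp [hU, one_apply]

variable [Fintype β]

/-- The coefficient `Tr[T_{ij} T_{kl}]` of `Tr[ρ_{ij} ρ_{kl}]` in the purity of the marginal of
`U ρ Uᴴ`, where `T_{ij}` is the partial trace of `U |i⟩⟨j| Uᴴ`. -/
noncomputable def overlap (U : Matrix (α × β) ι ℂ) (i j k l : ι) : ℂ :=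
  (marginalUnit U i j * marginalUnit U k l).trace

lemma overlap_eq_sum (U : Matrix (α × β) ι ℂ) (i j k l : ι) :
    overlap U i j k l = ∑ m, ∑ m', ∑ a, ∑ a',
      U (a, m) i * star (U (a, m') j) * (U (a', m') k * star (U (a', m) l)) := by
  simp only [overlap, trace, diag, mul_apply, marginalUnit, of_apply, Finset.sum_mul_sum]

lemma overlap_swap (U : Matrix (α × β) ι ℂ) (i j k l : ι) :
    overlap (U.submatrix Prod.swap id) i l k j = overlap U i j k l := by
  simp only [overlap_eq_sum, submatrix_apply, Prod.swap_prod_mk, id_eq]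
  calc ∑ a, ∑ a', ∑ m, ∑ m',
        U (a, m) i * star (U (a', m) l) * (U (a', m') k * star (U (a, m') j))
      = ∑ m, ∑ m', ∑ a, ∑ a',
        U (a, m) i * star (U (a', m) l) * (U (a', m') k * star (U (a, m') j)) := by
        simp only [Finset.sum_comm (s := (.univ : Finset α)) (t := (.univ : Finset β))]
    _ = _ := by
        congr! 4
        ring

lemma overlap_mul_diagonal [Fintype ι] [DecidableEq ι] (U : Matrix (α × β) ι ℂ) (q : ι → ℂ)
    (i j k l : ι) :
    overlap (U * diagonal q) i j k l =
      q i * star (q j) * q k * star (q l) * overlap U i j k l := by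
  simp only [overlap_eq_sum, mul_diagonal, star_mul', Finset.mul_sum]
  congr! 4
  ring

lemma sum_sum_overlap [Fintype ι] [DecidableEq α] [DecidableEq β] {U : Matrix (α × β) ι ℂ}
    (hU : U * Uᴴ = 1) :
    ∑ i, ∑ k, overlap U i i k k = Fintype.card α ^ 2 * Fintype.card β := by
  simp only [overlap, ← trace_sum, ← Finset.sum_mul_sum, sum_marginalUnit hU]
  simp [pow_two, mul_assoc]

lemma sum_sum_overlap_swap [Fintype ι] [DecidableEq α] [DecidableEq β] {U : Matrix (α × β) ι ℂ}
    (hU : U * Uᴴ = 1) :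
    ∑ i, ∑ k, overlap U i k k i = Fintype.card α * Fintype.card β ^ 2 := by
  have hswap : U.submatrix Prod.swap id * (U.submatrix Prod.swap id)ᴴ = 1 := by
    rw [conjTranspose_submatrix, ← submatrix_mul U Uᴴ _ _ _ Function.bijective_id, hU,
      submatrix_one Prod.swap Prod.swap_injective]
  simp only [← overlap_swap U, sum_sum_overlap hswap]
  ring

end MarginalUnits

section FlatUnitary

lemma exists_isometry_mul_star_self_eq (ι : Type*) [Fintype ι] [DecidableEq ι] [Nonempty ι] :
    ∃ H : Matrix ι ι ℂ, Hᴴ * H = 1 ∧ ∀ i j, H i j * star (H i j) = (Fintype.card ι : ℂ)⁻¹ := by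
  have : NeZero (Fintype.card ι) := ⟨Fintype.card_ne_zero⟩
  let e : ι ≃ ZMod (Fintype.card ι) := Fintype.equivOfCardEq (ZMod.card _).symm
  let s : ℂ := ((√(Fintype.card ι) : ℝ) : ℂ)⁻¹
  have hs : star s * s = (Fintype.card ι : ℂ)⁻¹ := by
    simp only [s, star_inv₀, Complex.star_def, Complex.conj_ofReal, ← mul_inv,
      ← Complex.ofReal_mul, Real.mul_self_sqrt (Nat.cast_nonneg _), Complex.ofReal_natCast]
  have hmul (x y : ZMod (Fintype.card ι)) :
      star (s * ZMod.stdAddChar x) * (s * ZMod.stdAddChar y) =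
        (Fintype.card ι : ℂ)⁻¹ * ZMod.stdAddChar (y - x) := by
    rw [← hs, sub_eq_neg_add, AddChar.map_add_eq_mul, AddChar.map_neg_eq_conj, star_mul']
    exact mul_mul_mul_comm ..
  have horth (i j : ι) : ∑ x, ZMod.stdAddChar (e x * e j - e x * e i) =
      if i = j then (Fintype.card ι : ℂ) else 0 := by
    simp only [← mul_sub]
    rw [e.sum_comp (fun x => ZMod.stdAddChar (x * (e j - e i))),
      AddChar.sum_mulShift _ (ZMod.isPrimitive_stdAddChar _)]
    simp only [sub_eq_zero, e.injective.eq_iff, eq_comm (a := i), ZMod.card, Nat.cast_ite,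
      Nat.cast_zero]
  refine ⟨of fun i j => s * ZMod.stdAddChar (e i * e j), ?_, fun i j => ?_⟩
  · ext i j
    simp only [mul_apply, conjTranspose_apply, of_apply, hmul, ← Finset.mul_sum, horth, one_apply]
    simp
  · simp only [of_apply, mul_comm _ (star _), hmul, sub_self, AddChar.map_zero_eq_one, mul_one]

end FlatUnitary

section Twirling

open scoped BigOperators

variable {α β : Type*} [Fintype α] [Fintype β]

lemma expect_perm_phase_sum_overlap {ι : Type*} [Fintype ι] [DecidableEq ι]
    (G : Matrix (α × β) ι ℂ) (t : ι → ι → ι → ι → ℂ) :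
    𝔼 π : Equiv.Perm ι, 𝔼 θ : ι → ZMod 3, ∑ i, ∑ j, ∑ k, ∑ l,
        overlap (G.submatrix id π * diagonal (phase θ)) i j k l * t i j k l =
      (𝔼 x ∈ Finset.offDiag .univ, overlap G x.1 x.1 x.2 x.2) *
          ∑ x ∈ Finset.offDiag .univ, t x.1 x.1 x.2 x.2 +
        (𝔼 x ∈ Finset.offDiag .univ, overlap G x.1 x.2 x.2 x.1) *
          ∑ x ∈ Finset.offDiag .univ, t x.1 x.2 x.2 x.1 +
        (𝔼 i, overlap G i i i i) * ∑ i, t i i i i := by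
  have hphase (U : Matrix (α × β) ι ℂ) : 𝔼 θ : ι → ZMod 3, ∑ i, ∑ j, ∑ k, ∑ l,
      overlap (U * diagonal (phase θ)) i j k l * t i j k l =
        ∑ x ∈ Finset.offDiag .univ, (overlap U x.1 x.1 x.2 x.2 * t x.1 x.1 x.2 x.2 +
          overlap U x.1 x.2 x.2 x.1 * t x.1 x.2 x.2 x.1) +
        ∑ i, overlap U i i i i * t i i i i := by
    simp only [← sum_ite_pairing fun i j k l => overlap U i j k l * t i j k l,
      overlap_mul_diagonal, Finset.expect_sum_comm, mul_assoc _ (overlap _ _ _ _ _),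
      ← Finset.expect_mul, expect_phase_mul, ite_mul, one_mul, zero_mul]
  have hperm (π : Equiv.Perm ι) (i j k l : ι) :
      overlap (G.submatrix id π) i j k l = overlap G (π i) (π j) (π k) (π l) := rfl
  simp only [hphase, hperm, Finset.expect_add_distrib, Finset.expect_sum_comm,
    Finset.sum_add_distrib, ← Finset.expect_mul, Finset.mul_sum]
  congr! 3 with x hx x hx i
  · rw [expect_perm_apply_apply (fun i k => overlap G i i k k) (by simpa using hx)]
  · rw [expect_perm_apply_apply (fun i k => overlap G i k k i) (by simpa using hx)]
  · rw [expect_perm_apply (fun i => overlap G i i i i)]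

variable [DecidableEq α] [DecidableEq β]

lemma expect_offDiag_overlap {ι : Type*} [Fintype ι] {G : Matrix (α × β) ι ℂ} (hG : G * Gᴴ = 1) :
    𝔼 x ∈ Finset.offDiag .univ, overlap G x.1 x.1 x.2 x.2 =
      (Fintype.card α ^ 2 * Fintype.card β - ∑ i, overlap G i i i i) /
        (Fintype.card ι * (Fintype.card ι - 1)) := by
  rw [← sum_sum_overlap hG, sum_sum_eq_sum_offDiag_add, add_sub_cancel_right,
    Finset.expect_eq_sum_div_card, Finset.offDiag_card, Finset.card_univ,
    Nat.cast_sub (Nat.le_mul_self _)]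
  push_cast
  ring

lemma expect_offDiag_overlap_swap {ι : Type*} [Fintype ι] {G : Matrix (α × β) ι ℂ}
    (hG : G * Gᴴ = 1) :
    𝔼 x ∈ Finset.offDiag .univ, overlap G x.1 x.2 x.2 x.1 =
      (Fintype.card α * Fintype.card β ^ 2 - ∑ i, overlap G i i i i) /
        (Fintype.card ι * (Fintype.card ι - 1)) := by
  rw [← sum_sum_overlap_swap hG, sum_sum_eq_sum_offDiag_add, add_sub_cancel_right,
    Finset.expect_eq_sum_div_card, Finset.offDiag_card, Finset.card_univ,
    Nat.cast_sub (Nat.le_mul_self _)]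
  push_cast
  ring

lemma expect_phase_sum_overlap [Nonempty α] [Nonempty β] {H : Matrix (α × β) (α × β) ℂ}
    (hH : ∀ x i, H x i * star (H x i) = (Fintype.card (α × β) : ℂ)⁻¹) :
    𝔼 θ : α × β → ZMod 3, ∑ i, overlap (diagonal (phase θ) * H) i i i i =
      Fintype.card α + Fintype.card β - 1 := by
  have hterm (θ : α × β → ZMod 3) (i : α × β) : overlap (diagonal (phase θ) * H) i i i i =
      ∑ m, ∑ m', ∑ a, ∑ a', phase θ (a, m) * star (phase θ (a, m')) * phase θ (a', m') *
        star (phase θ (a', m)) *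
        (H (a, m) i * star (H (a, m') i) * (H (a', m') i * star (H (a', m) i))) := by
    simp only [overlap_eq_sum, diagonal_mul, star_mul']
    congr! 4
    ring
  simp only [hterm, Finset.expect_sum_comm, ← Finset.expect_mul, expect_phase_mul]
  have hpair (i : α × β) (m m' : β) (a a' : α) :
      (if (a, m) = (a, m') ∧ (a', m') = (a', m) ∨ (a, m) = (a', m) ∧ (a, m') = (a', m') then 1
        else 0) * (H (a, m) i * star (H (a, m') i) * (H (a', m') i * star (H (a', m) i))) =
      ((if m = m' then 1 else 0) + (if a = a' then 1 else 0) -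
        (if m = m' then 1 else 0) * (if a = a' then 1 else 0)) *
        ((Fintype.card (α × β) : ℂ)⁻¹) ^ 2 := by
    by_cases hm : m = m'
    · subst hm
      rw [hH, hH]
      simp [pow_two]
    by_cases ha : a = a'
    · subst ha
      rw [mul_comm (H (a, m') i), mul_mul_mul_comm, mul_comm (star (H (a, m') i)), hH, hH]
      simp [pow_two]
    · simp [hm, ha]
  simp only [hpair, ← Finset.sum_mul, Finset.sum_add_distrib, Finset.sum_sub_distrib]
  simp only [Finset.sum_ite_irrel, Finset.sum_const, Finset.card_univ, nsmul_eq_mul, mul_one,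
    Finset.sum_ite_eq, Finset.mem_univ, if_true, Fintype.card_prod,
    Nat.cast_mul, mul_ite, mul_zero]
  field_simp

end Twirling

section Decoupling

open scoped BigOperators

lemma exists_isometry_re_sum_overlap_le {α β : Type*} [Fintype α] [Fintype β] [DecidableEq α]
    [DecidableEq β] [Nonempty α] [Nonempty β] (t : α × β → α × β → α × β → α × β → ℂ)
    {a b : ℝ} (ha : a = Fintype.card α) (hb : b = Fintype.card β) :
    ∃ U : Matrix (α × β) (α × β) ℂ, Uᴴ * U = 1 ∧
      (∑ i, ∑ j, ∑ k, ∑ l, overlap U i j k l * t i j k l).re ≤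
        (a ^ 2 * b - (a + b - 1)) / (a * b * (a * b - 1)) *
            (∑ x ∈ Finset.offDiag .univ, t x.1 x.1 x.2 x.2).re +
          (a * b ^ 2 - (a + b - 1)) / (a * b * (a * b - 1)) *
            (∑ x ∈ Finset.offDiag .univ, t x.1 x.2 x.2 x.1).re +
          (a + b - 1) / (a * b) * (∑ i, t i i i i).re := by
  obtain ⟨H, hHiso, hH⟩ := exists_isometry_mul_star_self_eq (α × β)
  let G (θ : α × β → ZMod 3) : Matrix (α × β) (α × β) ℂ := diagonal (phase θ) * H
  have hG (θ) : (G θ)ᴴ * G θ = 1 := by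
    rw [conjTranspose_mul, Matrix.mul_assoc, ← Matrix.mul_assoc _ _ H,
      conjTranspose_diagonal_phase_mul_self, Matrix.one_mul, hHiso]
  have havg : 𝔼 θ' : α × β → ZMod 3, 𝔼 π : Equiv.Perm (α × β), 𝔼 θ : α × β → ZMod 3,
      ∑ i, ∑ j, ∑ k, ∑ l,
        overlap ((G θ').submatrix id π * diagonal (phase θ)) i j k l * t i j k l =
      ((a ^ 2 * b - (a + b - 1)) / (a * b * (a * b - 1)) : ℝ) *
          ∑ x ∈ Finset.offDiag .univ, t x.1 x.1 x.2 x.2 +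
        ((a * b ^ 2 - (a + b - 1)) / (a * b * (a * b - 1)) : ℝ) *
          ∑ x ∈ Finset.offDiag .univ, t x.1 x.2 x.2 x.1 +
        ((a + b - 1) / (a * b) : ℝ) * ∑ i, t i i i i := by
    simp only [expect_perm_phase_sum_overlap, expect_offDiag_overlap (mul_eq_one_comm.1 (hG _)),
      expect_offDiag_overlap_swap (mul_eq_one_comm.1 (hG _)),
      Fintype.expect_eq_sum_div_card (ι := α × β), Finset.expect_add_distrib,
      ← Finset.expect_mul, ← Finset.expect_div, Finset.expect_sub_distrib, Fintype.expect_const, G,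
      expect_phase_sum_overlap hH, ha, hb]
    push_cast [Fintype.card_prod]
    rfl
  obtain ⟨θ', hθ'⟩ := exists_re_le_of_expect havg
  obtain ⟨π, hπ⟩ := exists_re_le_of_expect (Eq.refl (𝔼 π : Equiv.Perm (α × β), _))
  obtain ⟨θ, hθ⟩ := exists_re_le_of_expect (Eq.refl (𝔼 θ : α × β → ZMod 3, _))
  refine ⟨_, ?_, (hθ.trans (hπ.trans hθ')).trans_eq ?_⟩
  · rw [conjTranspose_mul, Matrix.mul_assoc, ← Matrix.mul_assoc _ _ (diagonal _),
      conjTranspose_submatrix, ← submatrix_mul _ _ _ _ _ Function.bijective_id, hG,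
      submatrix_one_equiv, Matrix.one_mul, conjTranspose_diagonal_phase_mul_self]
  · simp only [Complex.add_re, Complex.re_ofReal_mul]

-- At `a = b = 1` the quotient is `0 / 0 = 0`.
lemma offDiag_coeff_le {a b : ℝ} (ha : 1 ≤ a) (hb : 1 ≤ b) :
    (a ^ 2 * b - (a + b - 1)) / (a * b * (a * b - 1)) ≤ 1 / b := by
  rcases (one_le_mul_of_one_le_of_one_le ha hb).eq_or_lt with hab | hab
  · simp only [← hab, sub_self, mul_zero, div_zero]
    positivity
  · rw [div_le_div_iff₀ (mul_pos (by positivity) (by linarith)) (by positivity)]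
    nlinarith [mul_nonneg (by linarith : 0 ≤ b) (by linarith : 0 ≤ b - 1)]

lemma diag_coeff_le {a b : ℝ} (ha : 1 ≤ a) (hb : 1 ≤ b) :
    (a + b - 1) / (a * b) ≤
      (a ^ 2 * b - (a + b - 1)) / (a * b * (a * b - 1)) + 1 / a := by
  rcases (one_le_mul_of_one_le_of_one_le ha hb).eq_or_lt with hab | hab
  · have ha1 : a = 1 := by nlinarith
    have hb1 : b = 1 := by nlinarith
    simp [ha1, hb1]
  · have : 0 < a * b - 1 := by linarith
    rw [← sub_nonneg]
    have : (a ^ 2 * b - (a + b - 1)) / (a * b * (a * b - 1)) + 1 / a - (a + b - 1) / (a * b) =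
        (a - 1) / (a * (a * b - 1)) := by
      field_simp
      ring
    rw [this]
    exact div_nonneg (by linarith) (by positivity)

/-- The block `ρ_{ij}` of `ρ = ∑ |i⟩⟨j| ⊗ ρ_{ij}`. -/
def block {ι κ : Type*} (ρ : Matrix (ι × κ) (ι × κ) ℂ) (i j : ι) : Matrix κ κ ℂ :=
  ρ.submatrix (Prod.mk i) (Prod.mk j)

/-- The partial trace over the first factor. -/
noncomputable def marginal {ι κ : Type*} [Fintype ι] (ρ : Matrix (ι × κ) (ι × κ) ℂ) :
    Matrix κ κ ℂ :=
  ∑ i, block ρ i i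

section Blocks

variable {ι κ : Type*} {ρ : Matrix (ι × κ) (ι × κ) ℂ}

lemma conjTranspose_block (hρ : ρ.IsHermitian) (i j : ι) : (block ρ i j)ᴴ = block ρ j i := by
  rw [block, conjTranspose_submatrix, hρ.eq, block]

lemma isHermitian_marginal [Fintype ι] (hρ : ρ.IsHermitian) : (marginal ρ).IsHermitian := by
  simp only [IsHermitian, marginal, conjTranspose_sum, conjTranspose_block hρ]

variable [Fintype κ]

lemma re_trace_block_mul_nonneg (hρ : ρ.IsHermitian) (i j : ι) :
    0 ≤ (block ρ i j * block ρ j i).trace.re := by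
  rw [← conjTranspose_block hρ j i]
  exact hsNormSq_nonneg _

variable [Fintype ι] (ρ)

lemma purity_marginal_eq_add : purity (marginal ρ) =
    (∑ x ∈ Finset.offDiag .univ, (block ρ x.1 x.1 * block ρ x.2 x.2).trace).re +
      (∑ i, (block ρ i i * block ρ i i).trace).re := by
  rw [← Complex.add_re,
    ← sum_sum_eq_sum_offDiag_add (fun i k => (block ρ i i * block ρ k k).trace)]
  simp only [purity, marginal, Finset.sum_mul_sum, trace_sum]

lemma purity_eq_add : purity ρ =
    (∑ x ∈ Finset.offDiag .univ, (block ρ x.1 x.2 * block ρ x.2 x.1).trace).re +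
      (∑ i, (block ρ i i * block ρ i i).trace).re := by
  rw [← Complex.add_re,
    ← sum_sum_eq_sum_offDiag_add (fun i k => (block ρ i k * block ρ k i).trace)]
  simp only [purity, trace, diag, mul_apply, block, submatrix_apply, Fintype.sum_prod_type]
  exact congrArg Complex.re (Finset.sum_congr rfl fun _ _ => Finset.sum_comm)

end Blocks

section EncodedMarginal

variable {α β ι κ : Type*} [Fintype α] [Fintype ι]

/-- The state `Tr_α[(U ⊗ I) ρ (U ⊗ I)ᴴ]` of `β ⊗ κ`. -/
noncomputable def encodedMarginal (U : Matrix (α × β) ι ℂ) (ρ : Matrix (ι × κ) (ι × κ) ℂ) :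
    Matrix (β × κ) (β × κ) ℂ :=
  ∑ i, ∑ j, marginalUnit U i j ⊗ₖ block ρ i j

lemma isHermitian_encodedMarginal (U : Matrix (α × β) ι ℂ) {ρ : Matrix (ι × κ) (ι × κ) ℂ}
    (hρ : ρ.IsHermitian) : (encodedMarginal U ρ).IsHermitian := by
  have hunit (i j : ι) : (marginalUnit U i j)ᴴ = marginalUnit U j i := by
    ext m m'
    simp [marginalUnit, mul_comm]
  simp only [IsHermitian, encodedMarginal, conjTranspose_sum, conjTranspose_kronecker, hunit,
    conjTranspose_block hρ]
  exact Finset.sum_comm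

variable [Fintype β] [Fintype κ]

lemma trace_encodedMarginal_mul_self (U : Matrix (α × β) ι ℂ) (ρ : Matrix (ι × κ) (ι × κ) ℂ) :
    (encodedMarginal U ρ * encodedMarginal U ρ).trace =
      ∑ i, ∑ j, ∑ k, ∑ l, overlap U i j k l * (block ρ i j * block ρ k l).trace := by
  simp only [encodedMarginal, Finset.sum_mul]
  simp only [Finset.mul_sum, trace_sum, ← mul_kronecker_mul, trace_kronecker, overlap]

lemma trace_encodedMarginal_mul_one_kronecker [DecidableEq ι] [DecidableEq β]
    {U : Matrix (α × β) ι ℂ} (hU : Uᴴ * U = 1) (ρ : Matrix (ι × κ) (ι × κ) ℂ) (X : Matrix κ κ ℂ) :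
    (encodedMarginal U ρ * 1 ⊗ₖ X).trace = (marginal ρ * X).trace := by
  simp only [encodedMarginal, marginal, Finset.sum_mul, trace_sum, ← mul_kronecker_mul,
    trace_kronecker, Matrix.mul_one, trace_marginalUnit hU, ite_mul, one_mul, zero_mul,
    Finset.sum_ite_eq, Finset.mem_univ, if_true]

lemma hsNormSq_encodedMarginal_sub [DecidableEq ι] [DecidableEq β] [Nonempty β]
    {U : Matrix (α × β) ι ℂ} (hU : Uᴴ * U = 1) {ρ : Matrix (ι × κ) (ι × κ) ℂ}
    (hρ : ρ.IsHermitian) :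
    hsNormSq (encodedMarginal U ρ - (Fintype.card β : ℂ)⁻¹ • 1 ⊗ₖ marginal ρ) =
      (encodedMarginal U ρ * encodedMarginal U ρ).trace.re -
        purity (marginal ρ) / Fintype.card β := by
  have hcross := trace_encodedMarginal_mul_one_kronecker hU ρ (marginal ρ)
  have hscalar (z : ℂ) : ((Fintype.card β : ℂ)⁻¹ * z).re = z.re / Fintype.card β := by
    rw [← Complex.ofReal_natCast, ← Complex.ofReal_inv, Complex.re_ofReal_mul, inv_mul_eq_div]
  have hmixed : hsNormSq ((Fintype.card β : ℂ)⁻¹ • (1 : Matrix β β ℂ) ⊗ₖ marginal ρ) =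
      purity (marginal ρ) / Fintype.card β := by
    rw [hsNormSq, conjTranspose_smul, conjTranspose_kronecker, conjTranspose_one,
      (isHermitian_marginal hρ).eq, smul_mul_smul_comm, ← mul_kronecker_mul, trace_smul,
      trace_kronecker, Matrix.one_mul, trace_one, smul_eq_mul, star_inv₀, star_natCast,
      mul_assoc, inv_mul_cancel_left₀ (Nat.cast_ne_zero.2 Fintype.card_ne_zero), hscalar, purity]
  rw [hsNormSq_sub, hmixed, (isHermitian_encodedMarginal U hρ).eq, Matrix.mul_smul, trace_smul,
    hcross, smul_eq_mul, hscalar, hsNormSq, (isHermitian_encodedMarginal U hρ).eq, purity]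
  ring

end EncodedMarginal

theorem exists_isometry_hsNormSq_encodedMarginal_sub_le {α β κ : Type*} [Fintype α] [Fintype β]
    [Fintype κ] [DecidableEq α] [DecidableEq β] [Nonempty α] [Nonempty β]
    {ρ : Matrix ((α × β) × κ) ((α × β) × κ) ℂ} (hρ : ρ.IsHermitian) :
    ∃ U : Matrix (α × β) (α × β) ℂ, Uᴴ * U = 1 ∧
      hsNormSq (encodedMarginal U ρ - (Fintype.card β : ℂ)⁻¹ • 1 ⊗ₖ marginal ρ) ≤
        purity ρ / Fintype.card α := by
  obtain ⟨a, ha⟩ : ∃ a : ℝ, a = Fintype.card α := ⟨_, rfl⟩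
  obtain ⟨b, hb⟩ : ∃ b : ℝ, b = Fintype.card β := ⟨_, rfl⟩
  have ha1 : 1 ≤ a := by rw [ha]; exact_mod_cast Fintype.card_pos
  have hb1 : 1 ≤ b := by rw [hb]; exact_mod_cast Fintype.card_pos
  obtain ⟨U, hU, hle⟩ := exists_isometry_re_sum_overlap_le
    (fun i j k l => (block ρ i j * block ρ k l).trace) ha hb
  refine ⟨U, hU, ?_⟩
  rw [hsNormSq_encodedMarginal_sub hU hρ, trace_encodedMarginal_mul_self, ← ha, ← hb]
  have hmarg0 : 0 ≤ purity (marginal ρ) := purity_nonneg (isHermitian_marginal hρ)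
  have hdiag0 : 0 ≤ (∑ i, (block ρ i i * block ρ i i).trace).re := by
    rw [Complex.re_sum]
    exact Finset.sum_nonneg fun i _ => re_trace_block_mul_nonneg hρ i i
  have hoff0 : 0 ≤ (∑ x ∈ Finset.offDiag .univ,
      (block ρ x.1 x.2 * block ρ x.2 x.1).trace).re := by
    rw [Complex.re_sum]
    exact Finset.sum_nonneg fun x _ => re_trace_block_mul_nonneg hρ x.1 x.2
  have hx := mul_le_mul_of_nonneg_right (offDiag_coeff_le ha1 hb1) hmarg0
  have hy := mul_le_mul_of_nonneg_right (offDiag_coeff_le hb1 ha1) hoff0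
  have hz := mul_le_mul_of_nonneg_right (diag_coeff_le ha1 hb1) hdiag0
  rw [add_comm b a, mul_comm b a, mul_comm (b ^ 2)] at hy
  rw [purity_marginal_eq_add] at hx ⊢
  rw [purity_eq_add]
  simp only [div_eq_mul_inv, one_mul] at hle hx hy hz ⊢
  linarith

end Decoupling

section Protocol

variable {R A A₁ A₂ B : Type} [Fintype A] [Fintype B]

lemma isHermitian_redAR {ιR ιA : Type} (ψ : ιR × (ιA × B) → ℂ) : (redAR ψ).IsHermitian := by
  ext i j
  simp [redAR, mul_comm]

lemma marginal_redAR (ψ : R × (A × B) → ℂ) : marginal (redAR ψ) = redR ψ := by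
  ext r s
  simp only [marginal, block, redAR, redR, Matrix.sum_apply, submatrix_apply, of_apply,
    Fintype.sum_prod_type]

lemma isHermitian_redR (ψ : R × (A × B) → ℂ) : (redR ψ).IsHermitian :=
  marginal_redAR ψ ▸ isHermitian_marginal (isHermitian_redAR ψ)

lemma isHermitian_redA [Fintype R] {ιA : Type} (ψ : R × (ιA × B) → ℂ) : (redA ψ).IsHermitian := by
  ext i j
  simp [redA, mul_comm]

lemma trace_redR [Fintype R] (ψ : R × (A × B) → ℂ) : (redR ψ).trace = star ψ ⬝ᵥ ψ := by
  simp only [redR, trace, diag, of_apply, dotProduct, Fintype.sum_prod_type, Pi.star_apply,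
    mul_comm]

/-- The coefficient matrix, with respect to the cut `A₂R | A₁B`, of the state obtained from `ψ`
by applying `U : A → A₁ ⊗ A₂`. -/
def encodedMatrix (U : Matrix (A₁ × A₂) A ℂ) (ψ : R × (A × B) → ℂ) :
    Matrix (A₂ × R) (A₁ × B) ℂ :=
  of fun x y => ∑ i, U (y.1, x.1) i * ψ (x.2, (i, y.2))

lemma encodedMatrix_mul_conjTranspose [Fintype A₁] (U : Matrix (A₁ × A₂) A ℂ)
    (ψ : R × (A × B) → ℂ) :
    encodedMatrix U ψ * (encodedMatrix U ψ)ᴴ = encodedMarginal U (redAR ψ) := by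
  ext ⟨m, r⟩ ⟨m', s⟩
  simp only [encodedMatrix, encodedMarginal, marginalUnit, block, redAR, mul_apply,
    conjTranspose_apply, Matrix.sum_apply, kroneckerMap_apply, submatrix_apply, of_apply, star_sum,
    star_mul', Finset.sum_mul_sum]
  calc ∑ y : A₁ × B, ∑ i, ∑ j, U (y.1, m) i * ψ (r, (i, y.2)) *
        (star (U (y.1, m') j) * star (ψ (s, (j, y.2))))
      = ∑ i, ∑ j, ∑ y : A₁ × B, U (y.1, m) i * ψ (r, (i, y.2)) *
        (star (U (y.1, m') j) * star (ψ (s, (j, y.2)))) := by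
        rw [Finset.sum_comm]
        exact Finset.sum_congr rfl fun _ _ => Finset.sum_comm
    _ = _ := by
        simp only [Fintype.sum_prod_type, mul_mul_mul_comm]

variable [Fintype A₁] [Fintype A₂]

lemma hsNormSq_encodedMatrix [Fintype R] [DecidableEq A] {U : Matrix (A₁ × A₂) A ℂ}
    (hU : Uᴴ * U = 1) {ψ : R × (A × B) → ℂ} (hψ : star ψ ⬝ᵥ ψ = 1) :
    hsNormSq (encodedMatrix U ψ) = 1 := by
  classical
  have htrace := trace_encodedMarginal_mul_one_kronecker hU (redAR ψ) 1
  rw [one_kronecker_one, Matrix.mul_one, Matrix.mul_one, marginal_redAR, trace_redR, hψ] at htrace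
  rw [← hsNormSq_conjTranspose, hsNormSq, conjTranspose_conjTranspose,
    encodedMatrix_mul_conjTranspose, htrace, Complex.one_re]

/-- The coefficient matrix of `ψ ⊗ Φ`, with `Φ` maximally entangled on two copies of `A₂`, with
respect to the cut that puts `R` and the first copy of `A₂` on one side. -/
noncomputable def targetMatrix (A₂ : Type) [Fintype A₂] [DecidableEq A₂] {R C : Type}
    (ψ : R × C → ℂ) : Matrix (A₂ × R) (C × A₂) ℂ :=
  of fun x y => ψ (x.2, y.1) * maxEntVec A₂ (x.1, y.2)

lemma sum_maxEntVec_mul_star [DecidableEq A₂] (m m' : A₂) :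
    ∑ b, maxEntVec A₂ (m, b) * star (maxEntVec A₂ (m', b)) =
      ((Fintype.card A₂ : ℂ)⁻¹ • (1 : Matrix A₂ A₂ ℂ)) m m' := by
  have hinv : ((√(Fintype.card A₂) : ℝ) : ℂ)⁻¹ * star ((√(Fintype.card A₂) : ℝ) : ℂ)⁻¹ =
      (Fintype.card A₂ : ℂ)⁻¹ := by
    rw [star_inv₀, Complex.star_def, Complex.conj_ofReal, ← mul_inv, ← Complex.ofReal_mul,
      Real.mul_self_sqrt (Nat.cast_nonneg _), Complex.ofReal_natCast]
  rw [Matrix.smul_apply, one_apply]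
  simp only [maxEntVec, ite_mul, zero_mul, Finset.sum_ite_eq, Finset.mem_univ, if_true,
    eq_comm (a := m')]
  split_ifs
  · rw [hinv, smul_eq_mul, mul_one]
  · rw [star_zero, mul_zero, smul_zero]

lemma targetMatrix_mul_conjTranspose [DecidableEq A₂] (ψ : R × (A × B) → ℂ) :
    targetMatrix A₂ ψ * (targetMatrix A₂ ψ)ᴴ = (Fintype.card A₂ : ℂ)⁻¹ • 1 ⊗ₖ redR ψ := by
  ext ⟨m, r⟩ ⟨m', s⟩
  rw [← smul_kronecker, kroneckerMap_apply, ← sum_maxEntVec_mul_star]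
  simp only [targetMatrix, mul_apply, conjTranspose_apply, of_apply, star_mul',
    Fintype.sum_prod_type (α₁ := A × B), mul_mul_mul_comm _ (maxEntVec _ _),
    ← Finset.sum_mul_sum, redR, mul_comm]

lemma hsNormSq_targetMatrix [Fintype R] [DecidableEq A₂] [Nonempty A₂] {ψ : R × (A × B) → ℂ}
    (hψ : star ψ ⬝ᵥ ψ = 1) : hsNormSq (targetMatrix A₂ ψ) = 1 := by
  rw [← hsNormSq_conjTranspose, hsNormSq, conjTranspose_conjTranspose,
    targetMatrix_mul_conjTranspose, trace_smul, trace_kronecker, trace_redR, hψ, trace_one,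
    mul_one, smul_eq_mul, inv_mul_cancel₀ (Nat.cast_ne_zero.2 Fintype.card_ne_zero),
    Complex.one_re]

/-- The vector of `(K ⊗ C) ⊗ (M ⊗ D)` with coefficient matrix `X` with respect to the cut
`MK | CD`. -/
def cutVec {M K C D : Type} (X : Matrix (M × K) (C × D) ℂ) : (K × C) × (M × D) → ℂ :=
  fun x => X (x.2.1, x.1.1) (x.1.2, x.2.2)

lemma star_cutVec_dotProduct {M K C D : Type} [Fintype M] [Fintype K] [Fintype C] [Fintype D]
    (X Y : Matrix (M × K) (C × D) ℂ) : star (cutVec Y) ⬝ᵥ cutVec X = (Yᴴ * X).trace := by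
  let e : (K × C) × (M × D) ≃ (C × D) × (M × K) :=
    ⟨fun x => ((x.1.2, x.2.2), (x.2.1, x.1.1)), fun y => ((y.2.2, y.1.1), (y.2.1, y.1.2)),
      fun _ => rfl, fun _ => rfl⟩
  calc star (cutVec Y) ⬝ᵥ cutVec X
      = ∑ y : (C × D) × (M × K), star (Y y.2 y.1) * X y.2 y.1 :=
        Fintype.sum_equiv e _ _ fun _ => rfl
    _ = (Yᴴ * X).trace := Fintype.sum_prod_type _

lemma pureState_kronecker_maxEntState [DecidableEq A₂] {C : Type} (ψ : R × C → ℂ) :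
    pureState ψ ⊗ₖ maxEntState A₂ = pureState (cutVec (targetMatrix A₂ ψ)) := by
  ext x y
  simp only [pureState, maxEntState, kroneckerMap_apply, vecMulVec_apply, cutVec, targetMatrix,
    of_apply, Pi.star_apply, star_mul', mul_mul_mul_comm]

lemma mul_pureState_mul_conjTranspose {p q : Type*} [Fintype q] (F : Matrix p q ℂ) (v : q → ℂ) :
    F * pureState v * Fᴴ = pureState (F *ᵥ v) := by
  rw [pureState, mul_vecMulVec, vecMulVec_mul, ← star_mulVec, pureState]

lemma fqswMap_mulVec [Fintype R] [DecidableEq R] (U : Matrix (A₁ × A₂) (A₁ × A₂) ℂ)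
    (W : Matrix (((A₁ × A₂) × B) × A₂) (A₁ × B) ℂ) (ψ : R × ((A₁ × A₂) × B) → ℂ) :
    fqswMap U (W.map star) *ᵥ ψ = cutVec (encodedMatrix U ψ * Wᴴ) := by
  ext ⟨⟨r, q⟩, m, m'⟩
  simp only [mulVec, dotProduct, fqswMap, of_apply, map_apply, cutVec, encodedMatrix, mul_apply,
    conjTranspose_apply, Fintype.sum_prod_type (α₁ := R), ite_mul, zero_mul, Finset.sum_ite_irrel,
    Finset.sum_const_zero, Finset.sum_ite_eq, Finset.mem_univ, if_true, Finset.sum_mul]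
  calc ∑ x : (A₁ × A₂) × B, ∑ a, star (W (q, m') (a, x.2)) * U (a, m) x.1 * ψ (r, x)
      = ∑ i, ∑ y : A₁ × B, star (W (q, m') y) * U (y.1, m) i * ψ (r, (i, y.2)) := by
        rw [Fintype.sum_prod_type]
        simp only [Fintype.sum_prod_type_right]
    _ = ∑ y : A₁ × B, ∑ i, U (y.1, m) i * ψ (r, (i, y.2)) * star (W (q, m') y) := by
        rw [Finset.sum_comm]
        simp only [mul_assoc, mul_comm (star (W _ _))]

end Protocol

section OneShot

lemma nonempty_of_star_dotProduct_self_eq_one {ι : Type*} [Fintype ι] {v : ι → ℂ}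
    (hv : star v ⬝ᵥ v = 1) : Nonempty ι := by
  by_contra hempty
  rw [not_nonempty_iff] at hempty
  simp [dotProduct] at hv

lemma one_sub_sq_norm_le {z : ℂ} {ε : ℝ} (hz : 1 - ε / 2 ≤ z.re) : 1 - ‖z‖ ^ 2 ≤ ε := by
  have hre : z.re ^ 2 ≤ ‖z‖ ^ 2 := sq_le_sq.2 (by simpa using Complex.abs_re_le_norm z)
  nlinarith [sq_nonneg (z.re - 1)]

lemma sqrt_sqrt_eq_rpow {x : ℝ} (hx : 0 ≤ x) : √√x = x ^ (1 / 4 : ℝ) := by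
  rw [Real.sqrt_eq_rpow, Real.sqrt_eq_rpow, ← Real.rpow_mul hx]
  norm_num

lemma conjTranspose_map_star_mul_map_star {m n : Type*} [Fintype m] [DecidableEq n]
    {W : Matrix m n ℂ} (hW : Wᴴ * W = 1) : (W.map star)ᴴ * W.map star = 1 := by
  calc (W.map star)ᴴ * W.map star
      = Wᴴᴴᵀ * Wᴴᵀ := rfl
    _ = 1 := by rw [← transpose_mul, conjTranspose_conjTranspose, hW, transpose_one]

variable {R A₁ A₂ B : Type} [Fintype R] [DecidableEq R] [Fintype A₁] [DecidableEq A₁] [Fintype A₂]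
  [DecidableEq A₂] [Fintype B] [DecidableEq B]

lemma traceNorm_fqswMap_sub_le [Nonempty A₂] {ψ : R × ((A₁ × A₂) × B) → ℂ}
    (hψ : star ψ ⬝ᵥ ψ = 1) {U : Matrix (A₁ × A₂) (A₁ × A₂) ℂ} (hU : Uᴴ * U = 1)
    {W : Matrix (((A₁ × A₂) × B) × A₂) (A₁ × B) ℂ} (hW : Wᴴ * W = 1) {ε : ℝ}
    (hε : 1 - ε / 2 ≤ ((targetMatrix A₂ ψ)ᴴ * encodedMatrix U ψ * Wᴴ).trace.re) :
    traceNorm (fqswMap (ιR := R) U (W.map star) * pureState ψ *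
      (fqswMap (ιR := R) U (W.map star))ᴴ - pureState ψ ⊗ₖ maxEntState A₂) ≤ 2 * √ε := by
  have hout : star (cutVec (encodedMatrix U ψ * Wᴴ)) ⬝ᵥ cutVec (encodedMatrix U ψ * Wᴴ) = 1 := by
    rw [star_cutVec_dotProduct, ← ofReal_hsNormSq, ← hsNormSq_conjTranspose, conjTranspose_mul,
      conjTranspose_conjTranspose, hsNormSq_mul_of_isometry hW, hsNormSq_conjTranspose,
      hsNormSq_encodedMatrix hU hψ, Complex.ofReal_one]
  have htarget : star (cutVec (targetMatrix A₂ ψ)) ⬝ᵥ cutVec (targetMatrix A₂ ψ) = 1 := by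
    rw [star_cutVec_dotProduct, ← ofReal_hsNormSq, hsNormSq_targetMatrix hψ, Complex.ofReal_one]
  rw [mul_pureState_mul_conjTranspose, fqswMap_mulVec, pureState_kronecker_maxEntState]
  refine (traceNorm_pureState_sub_le hout htarget).trans ?_
  rw [star_cutVec_dotProduct, ← Matrix.mul_assoc]
  gcongr
  exact one_sub_sq_norm_le hε

theorem exists_fqsw_traceNorm_le {ψ : R × ((A₁ × A₂) × B) → ℂ} (hψ : star ψ ⬝ᵥ ψ = 1) :
    ∃ (U : Matrix (A₁ × A₂) (A₁ × A₂) ℂ) (V : Matrix (((A₁ × A₂) × B) × A₂) (A₁ × B) ℂ),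
      U ∈ unitaryGroup (A₁ × A₂) ℂ ∧ Vᴴ * V = 1 ∧
      traceNorm (fqswMap (ιR := R) U V * pureState ψ * (fqswMap (ιR := R) U V)ᴴ -
          pureState ψ ⊗ₖ maxEntState A₂) ≤
        2 * (Fintype.card A₁ * Fintype.card A₂ * Fintype.card R / Fintype.card A₁ ^ 2 *
          purity (redAR ψ)) ^ (1 / 4 : ℝ) := by
  obtain ⟨-, ⟨a₁, a₂⟩, -⟩ := nonempty_of_star_dotProduct_self_eq_one hψ
  have : Nonempty A₁ := ⟨a₁⟩
  have : Nonempty A₂ := ⟨a₂⟩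
  obtain ⟨U, hU, hdec⟩ := exists_isometry_hsNormSq_encodedMarginal_sub_le (isHermitian_redAR ψ)
  rw [marginal_redAR, ← encodedMatrix_mul_conjTranspose, ← targetMatrix_mul_conjTranspose] at hdec
  have hpur : 0 ≤ purity (redAR ψ) := purity_nonneg (isHermitian_redAR ψ)
  have hcard : Fintype.card (A₁ × B) ≤ Fintype.card (((A₁ × A₂) × B) × A₂) :=
    Fintype.card_le_of_injective (fun y => (((y.1, a₂), y.2), a₂)) fun y z h => by
      simpa [Prod.ext_iff] using h
  obtain ⟨W, hW, hfid⟩ := exists_isometry_one_sub_le_re_trace hcard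
    (hsNormSq_encodedMatrix hU hψ) (hsNormSq_targetMatrix hψ) (Real.sqrt_nonneg
      (Fintype.card A₁ * Fintype.card A₂ * Fintype.card R / Fintype.card A₁ ^ 2 *
        purity (redAR ψ))) (by
      rw [Real.sq_sqrt (by positivity), Fintype.card_prod, Nat.cast_mul]
      calc (Fintype.card A₂ * Fintype.card R : ℝ) * _
          ≤ Fintype.card A₂ * Fintype.card R * (purity (redAR ψ) / Fintype.card A₁) := by gcongr
        _ = _ := by field_simp)
  refine ⟨U, W.map star, mem_unitaryGroup_iff'.2 hU, conjTranspose_map_star_mul_map_star hW, ?_⟩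
  rw [← sqrt_sqrt_eq_rpow (by positivity)]
  exact traceNorm_fqswMap_sub_le hψ hU hW hfid

end OneShot

section Rates

variable {n δ hA hR hAR : ℝ}

lemma dim_ratio_le {a c r : ℝ} (ha : 0 < a) (hr : 0 ≤ r) (hac : a * c ≤ 2 ^ (n * (hA + δ)))
    (hr' : r ≤ 2 ^ (n * (hR + δ))) (hlog : n * ((hA + hR - hAR) / 2 + 2 * δ) ≤ Real.logb 2 a) :
    a * c * r / a ^ 2 ≤ 2 ^ (n * (hAR - 2 * δ)) := by
  have hsq : (2 : ℝ) ^ (n * (hA + hR - hAR + 4 * δ)) ≤ a ^ 2 := by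
    calc (2 : ℝ) ^ (n * (hA + hR - hAR + 4 * δ))
        = (2 ^ (n * ((hA + hR - hAR) / 2 + 2 * δ))) ^ 2 := by
          rw [← Real.rpow_natCast, ← Real.rpow_mul zero_le_two]
          congr 1
          push_cast
          ring
      _ ≤ a ^ 2 := by
          gcongr
          exact (Real.le_logb_iff_rpow_le one_lt_two ha).1 hlog
  calc a * c * r / a ^ 2
      ≤ 2 ^ (n * (hA + δ)) * 2 ^ (n * (hR + δ)) / 2 ^ (n * (hA + hR - hAR + 4 * δ)) := by
        gcongr
    _ = 2 ^ (n * (hAR - 2 * δ)) := by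
        rw [← Real.rpow_add two_pos, ← Real.rpow_sub two_pos]
        congr 1
        ring

lemma mul_le_two_rpow {x y p q s : ℝ} (hx0 : 0 ≤ x) (hx : x ≤ 2 ^ p) (hy : y ≤ 2 ^ q)
    (hs : p + q ≤ s) : x * y ≤ 2 ^ s :=
  calc x * y ≤ 2 ^ p * 2 ^ q := mul_le_mul_of_nonneg hx hy hx0 (by positivity)
    _ = 2 ^ (p + q) := (Real.rpow_add two_pos p q).symm
    _ ≤ 2 ^ s := Real.rpow_le_rpow_of_exponent_le one_le_two hs

lemma two_mul_rpow_le {x s : ℝ} (hx0 : 0 ≤ x) (hx : x ≤ 4 * 2 ^ s) :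
    2 * x ^ (1 / 4 : ℝ) ≤ √8 * 2 ^ (s / 4) := by
  have hsqrt : √8 = 2 * 4 ^ (1 / 4 : ℝ) := by
    rw [← sqrt_sqrt_eq_rpow (by norm_num), show (8 : ℝ) = 2 ^ 2 * 2 by norm_num,
      show (4 : ℝ) = 2 ^ 2 by norm_num, Real.sqrt_mul (by norm_num), Real.sqrt_sq zero_le_two]
  calc 2 * x ^ (1 / 4 : ℝ) ≤ 2 * (4 * 2 ^ s) ^ (1 / 4 : ℝ) := by gcongr
    _ = √8 * 2 ^ (s / 4) := by
      rw [Real.mul_rpow (by norm_num) (by positivity), ← Real.rpow_mul zero_le_two, hsqrt,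
        mul_one_div, mul_assoc]

end Rates

end FQSW

/-- **I.i.d. form of the fully quantum Slepian–Wolf bound.**  Under the typicality bounds
`d_A ≤ 2^{n(H_A+δ)}`, `d_R ≤ 2^{n(H_R+δ)}`, `Tr[(ψ^{AR})²] ≤ 2^{−n(H_{AR}−δ)}`,
`Tr[(ψ^A)²]Tr[(ψ^R)²] ≤ 2^{−n(H_A+H_R−2δ)}`, `log₂ d_{A₁} ≥ n(I/2+2δ)` and `nI ≥ nδ+1`
(where `I = H_A + H_R − H_{AR}`), the one-shot FQSW error bound is at most
`√8 · 2^{−nδ/4}`; consequently there are a unitary `U` on `A = A₁⊗A₂`, a space `B̃` of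
dimension `d_{A₂}`, and an isometry `V : A₁⊗B → (A⊗B)⊗B̃` with
`‖ (V∘U) ψ (V∘U)† − ψ^{R(AB)} ⊗ Φ^{A₂B̃} ‖₁ ≤ √8 · 2^{−nδ/4}`. -/
theorem iid_FQSW
    {ιR ιA₁ ιA₂ ιB : Type}
    [Fintype ιR] [DecidableEq ιR] [Fintype ιA₁] [DecidableEq ιA₁]
    [Fintype ιA₂] [DecidableEq ιA₂] [Fintype ιB] [DecidableEq ιB]
    (ψ : ιR × ((ιA₁ × ιA₂) × ιB) → ℂ)
    (hψ : star ψ ⬝ᵥ ψ = 1)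
    (n : ℕ) (hn : 1 ≤ n) (δ HA HR HAR : ℝ) (hδ : 0 < δ)
    (hdA : (Fintype.card ιA₁ * Fintype.card ιA₂ : ℝ) ≤ 2 ^ ((n : ℝ) * (HA + δ)))
    (hdR : (Fintype.card ιR : ℝ) ≤ 2 ^ ((n : ℝ) * (HR + δ)))
    (hpurAR : purity (redAR ψ) ≤ 2 ^ (-(n : ℝ) * (HAR - δ)))
    (hpurA : purity (redA ψ) * purity (redR ψ) ≤ 2 ^ (-(n : ℝ) * (HA + HR - 2 * δ)))
    (hdA1 : (n : ℝ) * ((HA + HR - HAR) / 2 + 2 * δ) ≤ Real.logb 2 (Fintype.card ιA₁))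
    (hnI : (n : ℝ) * δ + 1 ≤ (n : ℝ) * (HA + HR - HAR)) :
    2 * ((2 * (Fintype.card ιA₁ * Fintype.card ιA₂ : ℝ) * (Fintype.card ιR : ℝ)
            / (Fintype.card ιA₁ : ℝ) ^ 2)
          * (purity (redAR ψ) + 2 * purity (redA ψ) * purity (redR ψ)))
          ^ ((1 : ℝ) / 4)
        ≤ Real.sqrt 8 * 2 ^ (-(n : ℝ) * δ / 4)
    ∧ ∃ (U : Matrix (ιA₁ × ιA₂) (ιA₁ × ιA₂) ℂ)
        (V : Matrix (((ιA₁ × ιA₂) × ιB) × ιA₂) (ιA₁ × ιB) ℂ),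
        U ∈ Matrix.unitaryGroup (ιA₁ × ιA₂) ℂ ∧ Vᴴ * V = 1 ∧
        traceNorm
            (fqswMap (ιR := ιR) U V * pureState ψ * (fqswMap (ιR := ιR) U V)ᴴ - pureState ψ ⊗ₖ maxEntState ιA₂)
          ≤ Real.sqrt 8 * 2 ^ (-(n : ℝ) * δ / 4) := by
  obtain ⟨-, ⟨a₁, -⟩, -⟩ := FQSW.nonempty_of_star_dotProduct_self_eq_one hψ
  have hA₁ : (0 : ℝ) < Fintype.card ιA₁ := Nat.cast_pos.2 (Fintype.card_pos_iff.2 ⟨a₁⟩)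
  have hratio := FQSW.dim_ratio_le hA₁ (Nat.cast_nonneg _) hdA hdR hdA1
  have hratio0 : (0 : ℝ) ≤ Fintype.card ιA₁ * Fintype.card ιA₂ * Fintype.card ιR /
      (Fintype.card ιA₁ : ℝ) ^ 2 := by positivity
  have hAR := FQSW.mul_le_two_rpow (s := -n * δ) hratio0 hratio hpurAR (by linarith)
  have hprod := FQSW.mul_le_two_rpow (s := -n * δ - 1) hratio0 hratio hpurA (by linarith)
  rw [Real.rpow_sub_one two_ne_zero] at hprod
  have hAR0 := FQSW.purity_nonneg (FQSW.isHermitian_redAR ψ)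
  have hA0 := FQSW.purity_nonneg (FQSW.isHermitian_redA ψ)
  have hR0 := FQSW.purity_nonneg (FQSW.isHermitian_redR ψ)
  obtain ⟨U, V, hU, hV, hUV⟩ := FQSW.exists_fqsw_traceNorm_le hψ
  refine ⟨FQSW.two_mul_rpow_le (by positivity) ?_, U, V, hU, hV,
    hUV.trans (FQSW.two_mul_rpow_le (mul_nonneg hratio0 hAR0) ?_)⟩
  · linear_combination 2 * hAR + 4 * hprod
  · linear_combination hAR + 3 * Real.rpow_nonneg zero_le_two (-n * δ)
end
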